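/- arXiv:2206.11295 — 4 statements merged into one kernel-verified Lean document; each statement's English description precedes it below -/
import Mathlib

section
/- Let m ≥ 1, let h be a smooth positive function on a neighborhood of 0 in ℝ^m, fix i ∈ {1,…,m}, and let f_i(x,s) = ∫_{[0,1]^{m−1}} h(t_1x_1,…,t_{i−1}x_{i−1}, s, t_{i+1}x_{i+1},…,t_mx_m) dt. Suppose ρ_i is a smooth function on a neighborhood U of 0 with ρ_i(0) = 0 satisfying ∫_0^{x_i} f_i(x,s) ds + ∫_0^{ρ_i(x)} f_i(x,s) ds = 0 on U. Then, for all x in a sufficiently small neighborhood of 0: (i) ρ_i(x_1,…,x_{i−1}, ρ_i(x), x_{i+1},…,x_m) = x_i (the reflection map r_i(x) = (x_1,…,ρ_i(x),…,x_m) is an involution); (ii) if x_i > 0 then ρ_i(x) < 0, and if x_i < 0 then ρ_i(x) > 0. -/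
open MeasureTheory

noncomputable section

/-- The fiber integral `f_i(x,s) = ∫_{[0,1]^{m−1}} h(t₁x₁,…,s,…,t_mx_m) dt` (in the
`i`-th slot one puts `s`; since the integrand does not depend on `t_i`, integrating over
the full unit cube `[0,1]^m` gives the same value). -/
def reflInt {m : ℕ} (h : (Fin m → ℝ) → ℝ) (i : Fin m) (x : Fin m → ℝ) (s : ℝ) : ℝ :=
  ∫ t in Set.Icc (0 : Fin m → ℝ) 1, h (Function.update (fun k => t k * x k) i s)

/-!
For fixed `x` near `0` the fiber integral `f_i(x, ·)` is positive, so its primitive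
`F_x(a) = ∫_0^a f_i(x, s) ds` is strictly increasing near `0`, and the defining identity reads
`F_x(ρ x) = -F_x(x_i)`. Comparing signs gives the exchange of sides. As `f_i(x, ·)` does not depend
on `x_i`, the point `x` and its reflection `r_i x` share the same primitive; applying the
identity at both points gives `F_x(ρ (r_i x)) = -F_x(ρ x) = F_x(x_i)`, and injectivity of `F_x` yields the
involution.
-/

open Function Set Topology
open Metric (ball mem_ball_self pos_of_mem_ball)

lemma continuousOn_setIntegral_of_isCompact {X Y E : Type*} [TopologicalSpace X]
    [TopologicalSpace Y] [MeasurableSpace Y] [OpensMeasurableSpace Y]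
    [NormedAddCommGroup E] [NormedSpace ℝ E] {μ : Measure Y} [IsFiniteMeasureOnCompacts μ]
    {f : X → Y → E} {s : Set X} {k : Set Y} (hk : IsCompact k) (hkm : MeasurableSet k)
    (hf : ContinuousOn f.uncurry (s ×ˢ k)) :
    ContinuousOn (fun x ↦ ∫ y in k, f x y ∂μ) s := by
  have : CompactSpace k := isCompact_iff_compactSpace.1 hk
  have hfk : ContinuousOn (uncurry fun x (y : k) ↦ f x y) (s ×ˢ univ) :=
    hf.comp (f := Prod.map id ((↑) : k → Y)) (by fun_prop) fun p hp ↦ ⟨hp.1, p.2.2⟩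
  have : IsFiniteMeasureOnCompacts (μ.comap ((↑) : k → Y)) :=
    .comap' μ continuous_subtype_val (.subtype_coe hkm)
  simp only [← integral_subtype_comap hkm]
  exact continuousOn_integral_of_compact_support isCompact_univ hfk
    fun _ y _ hy ↦ (hy (mem_univ y)).elim

lemma setIntegral_pos_of_forall_mem_pos {X : Type*} [MeasurableSpace X] {μ : Measure X}
    {f : X → ℝ} {s : Set X} (hs : MeasurableSet s) (hμs : μ s ≠ 0) (hfi : IntegrableOn f s μ)
    (hf : ∀ x ∈ s, 0 < f x) : 0 < ∫ x in s, f x ∂μ := by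
  have hsupport : support f ∩ s = s := inter_eq_right.2 fun x hx ↦ (hf x hx).ne'
  rw [setIntegral_pos_iff_support_of_nonneg_ae _ hfi, hsupport]
  · exact hμs.bot_lt
  · exact ae_restrict_of_forall_mem hs fun x hx ↦ (hf x hx).le

lemma strictMonoOn_intervalIntegral {f : ℝ → ℝ} {S : Set ℝ} {c : ℝ} (hS : S.OrdConnected)
    (hc : c ∈ S) (hfi : LocallyIntegrableOn f S) (hf : ∀ s ∈ S, 0 < f s) :
    StrictMonoOn (fun a ↦ ∫ s in c..a, f s) S := by
  intro a ha b hb hab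
  have hint : ∀ p ∈ S, ∀ q ∈ S, IntervalIntegrable f volume p q := fun p hp q hq ↦
    (hfi.integrableOn_compact_subset (hS.uIcc_subset hp hq) isCompact_uIcc).intervalIntegrable
  have hpos : 0 < ∫ s in a..b, f s :=
    intervalIntegral.intervalIntegral_pos_of_pos_on (hint a ha b hb)
      (fun s hs ↦ hf s (hS.out ha hb (Ioo_subset_Icc_self hs))) hab
  calc ∫ s in c..a, f s
    _ < (∫ s in c..a, f s) + ∫ s in a..b, f s := lt_add_of_pos_right _ hpos
    _ = ∫ s in c..b, f s :=
      intervalIntegral.integral_add_adjacent_intervals (hint c hc a ha) (hint a ha b hb)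

lemma lt_iff_lt_of_strictMonoOn_of_add_eq_zero {α G : Type*} [LinearOrder α] [AddCommGroup G]
    [PartialOrder G] [IsOrderedAddMonoid G] {F : α → G} {S : Set α} {a b c : α}
    (hF : StrictMonoOn F S) (ha : a ∈ S) (hb : b ∈ S) (hc : c ∈ S) (hFc : F c = 0)
    (hab : F a + F b = 0) : c < a ↔ b < c := by
  rw [← hF.lt_iff_lt hc ha, ← hF.lt_iff_lt hb hc, hFc, eq_neg_of_add_eq_zero_left hab, neg_pos]

lemma update_mul_mem_ball {ι : Type*} [Fintype ι] [DecidableEq ι] {i : ι} {x t : ι → ℝ}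
    {r s : ℝ} (hx : x ∈ ball 0 r) (hs : s ∈ ball 0 r) (ht : t ∈ Icc 0 1) :
    update (fun k ↦ t k * x k) i s ∈ ball 0 r := by
  have hr : 0 < r := pos_of_mem_ball hs
  rw [mem_ball_zero_iff, pi_norm_lt_iff hr] at hx ⊢
  intro k
  obtain rfl | hk := eq_or_ne k i
  · simpa only [update_self] using mem_ball_zero_iff.1 hs
  · have htk : ‖t k‖ ≤ 1 := (Real.norm_of_nonneg (ht.1 k)).trans_le (ht.2 k)
    calc ‖update (fun k ↦ t k * x k) i s k‖
      _ = ‖t k‖ * ‖x k‖ := by rw [update_of_ne hk, norm_mul]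
      _ ≤ ‖x k‖ := mul_le_of_le_one_left (norm_nonneg _) htk
      _ < r := hx k

section ReflInt

variable {m : ℕ} {i : Fin m} {x : Fin m → ℝ} {h : (Fin m → ℝ) → ℝ} {V : Set (Fin m → ℝ)}

lemma reflInt_update (a : ℝ) : reflInt h i (update x i a) = reflInt h i x := by
  have hpt (t : Fin m → ℝ) (s : ℝ) :
      update (fun k ↦ t k * update x i a k) i s = update (fun k ↦ t k * x k) i s := by
    ext k
    obtain rfl | hk := eq_or_ne k i
    · simp only [update_self]
    · simp only [update_of_ne hk]
  ext s
  simp only [reflInt, hpt]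

lemma continuousOn_reflInt {S : Set ℝ} (hh : ContinuousOn h V)
    (hSV : ∀ s ∈ S, ∀ t ∈ Icc (0 : Fin m → ℝ) 1, update (fun k ↦ t k * x k) i s ∈ V) :
    ContinuousOn (reflInt h i x) S := by
  have hpt : Continuous fun p : ℝ × (Fin m → ℝ) ↦ update (fun k ↦ p.2 k * x k) i p.1 :=
    Continuous.update (by fun_prop) i continuous_fst
  exact continuousOn_setIntegral_of_isCompact isCompact_Icc measurableSet_Icc
    (hh.comp hpt.continuousOn fun p hp ↦ hSV p.1 hp.1 p.2 hp.2)

lemma reflInt_pos {s : ℝ} (hh : ContinuousOn h V) (hpos : ∀ y ∈ V, 0 < h y)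
    (hsV : ∀ t ∈ Icc (0 : Fin m → ℝ) 1, update (fun k ↦ t k * x k) i s ∈ V) :
    0 < reflInt h i x s := by
  have hpt : Continuous fun t : Fin m → ℝ ↦ update (fun k ↦ t k * x k) i s :=
    Continuous.update (by fun_prop) i continuous_const
  have hcont : ContinuousOn (fun t : Fin m → ℝ ↦ h (update (fun k ↦ t k * x k) i s)) (Icc 0 1) :=
    hh.comp hpt.continuousOn hsV
  have hvol : volume (Icc (0 : Fin m → ℝ) 1) ≠ 0 := by simp [Real.volume_Icc_pi]
  exact setIntegral_pos_of_forall_mem_pos measurableSet_Icc hvol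
    (hcont.integrableOn_compact isCompact_Icc) fun t ht ↦ hpos _ (hsV t ht)

lemma exists_forall_strictMonoOn_integral_reflInt (i : Fin m) (hV : V ∈ 𝓝 0)
    (hh : ContinuousOn h V) (h0 : 0 < h 0) :
    ∃ r > 0, ∀ x ∈ ball (0 : Fin m → ℝ) r,
      StrictMonoOn (fun a ↦ ∫ s in (0 : ℝ)..a, reflInt h i x s) (ball 0 r) := by
  have hpos : ∀ᶠ y in 𝓝 0, 0 < h y := (hh.continuousAt hV).eventually_const_lt h0
  obtain ⟨r, hr, hball⟩ := Metric.eventually_nhds_iff_ball.1 (hpos.and hV)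
  have hcont : ContinuousOn h (ball 0 r) := hh.mono fun y hy ↦ (hball y hy).2
  refine ⟨r, hr, fun x hx ↦ ?_⟩
  have hreflInt : ContinuousOn (reflInt h i x) (ball 0 r) :=
    continuousOn_reflInt hcont fun s hs t ht ↦ update_mul_mem_ball hx hs ht
  exact strictMonoOn_intervalIntegral (convex_ball 0 r).ordConnected (mem_ball_self hr)
    (hreflInt.locallyIntegrableOn measurableSet_ball)
    fun s hs ↦ reflInt_pos hcont (fun y hy ↦ (hball y hy).1)
      fun t ht ↦ update_mul_mem_ball hx hs ht

end ReflInt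

theorem stmt12_general {m : ℕ} {i : Fin m} {h ρ : (Fin m → ℝ) → ℝ} {V U : Set (Fin m → ℝ)}
    (hV : V ∈ 𝓝 0) (hh : ContinuousOn h V) (h0 : 0 < h 0)
    (hU : U ∈ 𝓝 0) (hρc : ContinuousAt ρ 0) (hρ0 : ρ 0 = 0)
    (hρ : ∀ x ∈ U, (∫ s in (0 : ℝ)..(x i), reflInt h i x s)
      + (∫ s in (0 : ℝ)..(ρ x), reflInt h i x s) = 0) :
    ∃ U' : Set (Fin m → ℝ), IsOpen U' ∧ (0 : Fin m → ℝ) ∈ U' ∧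
      (∀ x ∈ U', ρ (update x i (ρ x)) = x i) ∧
      (∀ x ∈ U', (0 < x i → ρ x < 0) ∧ (x i < 0 → 0 < ρ x)) := by
  obtain ⟨r, hr, hmono⟩ := exists_forall_strictMonoOn_integral_reflInt i hV hh h0
  have h0r : (0 : ℝ) ∈ ball 0 r := mem_ball_self hr
  have hx_mem : ∀ᶠ x : Fin m → ℝ in 𝓝 0, x ∈ ball 0 r := Metric.ball_mem_nhds 0 hr
  have hxi_mem : ∀ᶠ x : Fin m → ℝ in 𝓝 0, x i ∈ ball 0 r :=
    (continuous_apply i).continuousAt.eventually_mem (Metric.ball_mem_nhds _ hr)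
  have hρ_mem : ∀ᶠ x in 𝓝 0, ρ x ∈ ball 0 r :=
    hρc.eventually_mem (hρ0 ▸ Metric.ball_mem_nhds _ hr)
  have hrefl : Filter.Tendsto (fun x ↦ update x i (ρ x)) (𝓝 0) (𝓝 0) := by
    simpa [ContinuousAt, hρ0] using continuousAt_id.update i hρc
  obtain ⟨U', hU', hU'o, h0U'⟩ := eventually_nhds_iff.1 <|
    (hx_mem.and <| hxi_mem.and <| hρ_mem.and hU).and (hrefl.eventually (hρ_mem.and hU))
  refine ⟨U', hU'o, h0U', fun x hx ↦ ?_, fun x hx ↦ ?_⟩ <;>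
    obtain ⟨⟨hxr, hxir, hρxr, hxU⟩, hρrefl, hreflU⟩ := hU' x hx
  · have hvol := hρ x hxU
    have hvol_refl := hρ _ hreflU
    rw [reflInt_update, update_self] at hvol_refl
    exact (hmono x hxr).injOn hρrefl hxir (by linarith)
  · have hzero : ∫ s in (0 : ℝ)..0, reflInt h i x s = 0 := intervalIntegral.integral_same
    exact ⟨(lt_iff_lt_of_strictMonoOn_of_add_eq_zero (hmono x hxr) hxir hρxr h0r hzero
        (hρ x hxU)).1,
      (lt_iff_lt_of_strictMonoOn_of_add_eq_zero (hmono x hxr) hρxr hxir h0r hzero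
        ((add_comm _ _).trans (hρ x hxU))).2⟩

/-- The volume-preserving reflection encoded by `ρ_i` is an involution
near `0` and maps each side of the hyperplane `{x_i = 0}` to the other. -/
theorem stmt12 {m : ℕ} (hm : 1 ≤ m) (i : Fin m)
    (h : (Fin m → ℝ) → ℝ)
    (V : Set (Fin m → ℝ)) (hV : IsOpen V) (h0V : (0 : Fin m → ℝ) ∈ V)
    (hsm : ContDiffOn ℝ (⊤ : ℕ∞) h V) (hpos : ∀ x ∈ V, 0 < h x)
    (U : Set (Fin m → ℝ)) (hU : IsOpen U) (h0U : (0 : Fin m → ℝ) ∈ U)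
    (ρ : (Fin m → ℝ) → ℝ) (hρsm : ContDiffOn ℝ (⊤ : ℕ∞) ρ U) (hρ0 : ρ 0 = 0)
    (hρ : ∀ x ∈ U, (∫ s in (0:ℝ)..(x i), reflInt h i x s)
      + (∫ s in (0:ℝ)..(ρ x), reflInt h i x s) = 0) :
    ∃ U' : Set (Fin m → ℝ), IsOpen U' ∧ (0 : Fin m → ℝ) ∈ U' ∧
      (∀ x ∈ U', ρ (Function.update x i (ρ x)) = x i) ∧
      (∀ x ∈ U', (0 < x i → ρ x < 0) ∧ (x i < 0 → 0 < ρ x)) := by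
  exact stmt12_general (hV.mem_nhds h0V) hsm.continuousOn (hpos 0 h0V) (hU.mem_nhds h0U)
    (hρsm.continuousOn.continuousAt (hU.mem_nhds h0U)) hρ0 hρ
end
end

section
/- Let h and h̃ be smooth positive functions on neighborhoods of 0 in ℝ², and let φ(x,y) = (φ_1(x), φ_2(y)) be a diffeomorphism-germ at 0 ∈ ℝ² with φ_1(0) = φ_2(0) = 0, φ_1' > 0, φ_2' > 0, and h(x,y) = h̃(φ_1(x),φ_2(y))·φ_1'(x)·φ_2'(y). Let f(x,y,s) = ∫_0^1 h(s, t y) dt and f̃(u,v,s) = ∫_0^1 h̃(s, t v) dt, and let ρ and ρ̃ be smooth functions on neighborhoods of 0 with ρ(0,0) = 0, ρ̃(0,0) = 0 satisfying ∫_0^{x} f(x,y,s) ds + ∫_0^{ρ(x,y)} f(x,y,s) ds = 0 and ∫_0^{u} f̃(u,v,s) ds + ∫_0^{ρ̃(u,v)} f̃(u,v,s) ds = 0. Then φ_1(ρ(x,y)) = ρ̃(φ_1(x), φ_2(y)) for all (x,y) in a neighborhood of 0. -/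
open MeasureTheory

noncomputable section

/-! Put `F(x, y) = ∫₀ˣ ∫₀¹ h(s, t y) dt ds`, the volume of the rectangle `[0, x] × [0, y]` divided
by `y`, and likewise `F̃` for `h̃`. Substituting `r = φ₁(s)` and `w = φ₂(t y)` gives
`F(x, y) = c(y) F̃(φ₁(x), φ₂(y))`, where `c(y) = φ₂(y) / y` extends continuously by `c(0) = φ₂'(0)`
and is nonzero near `0`. The equation defining `ρ` therefore says that
`F̃(φ₁(x), v) + F̃(φ₁(ρ(x, y)), v) = 0` with `v = φ₂(y)`, which is the equation solved by
`ρ̃(φ₁(x), v)`, and `F̃(·, v)` is strictly increasing because `h̃` is positive. -/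

open Set Filter Topology Function

/-- The mean of the density `h` over the segment from `(s, 0)` to `(s, y)`, the function
`f(x, y, s)` of the theorem. Rescaling the segment to `[0, 1]` gives the value `h s 0` at
`y = 0`. -/
def fiberMean (h : ℝ → ℝ → ℝ) (s y : ℝ) : ℝ :=
  ∫ t in (0 : ℝ)..1, h s (t * y)

/-- The signed volume of the rectangle `[0, x] × [0, y]` for the density `h`, divided by `y`. Using
`fiberMean` instead of an actual quotient gives the limiting value at `y = 0`. -/
def normalizedVolume (h : ℝ → ℝ → ℝ) (x y : ℝ) : ℝ :=
  ∫ s in (0 : ℝ)..x, fiberMean h s y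

/-- `ρ` represents the germ at the origin of the volume-preserving reflection
`(x, y) ↦ (ρ (x, y), y)` for the density `h`: the rectangles from the axis `x = 0` to a point and
to its mirror image have opposite signed volumes. The equation is divided by `y`, so that it also
determines `ρ (x, 0)`. -/
structure IsReflectionGerm (h ρ : ℝ → ℝ → ℝ) : Prop where
  continuousAt : ContinuousAt (uncurry ρ) (0, 0)
  map_zero : ρ 0 0 = 0
  eventually_add_eq_zero : ∀ᶠ p : ℝ × ℝ in 𝓝 (0, 0),
    normalizedVolume h p.1 p.2 + normalizedVolume h (ρ p.1 p.2) p.2 = 0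

theorem exists_ordConnected_nhds_of_eventually_prod {P : ℝ × ℝ → Prop} {a b : ℝ}
    (hP : ∀ᶠ p in 𝓝 (a, b), P p) :
    ∃ I ∈ 𝓝 a, ∃ J ∈ 𝓝 b, I.OrdConnected ∧ J.OrdConnected ∧ ∀ x ∈ I, ∀ y ∈ J, P (x, y) := by
  obtain ⟨ε, hε, hball⟩ := Metric.eventually_nhds_iff_ball.mp hP
  refine ⟨Metric.ball a ε, Metric.ball_mem_nhds a hε, Metric.ball b ε, Metric.ball_mem_nhds b hε,
    (convex_ball a ε).ordConnected, (convex_ball b ε).ordConnected, fun x hx y hy => hball _ ?_⟩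
  rw [← ball_prod_same]
  exact ⟨hx, hy⟩

theorem continuousOn_intervalIntegral_of_continuousOn_prod {X : Type*} [TopologicalSpace X]
    {f : X → ℝ → ℝ} {S : Set X} {a b : ℝ} (hab : a ≤ b)
    (hf : ContinuousOn (uncurry f) (S ×ˢ Icc a b)) :
    ContinuousOn (fun x => ∫ t in a..b, f x t) S := by
  rw [continuousOn_iff_continuous_domRestrict]
  have hproj : Continuous fun x : S => ∫ t in a..b, f x (projIcc a b hab t) :=
    intervalIntegral.continuous_parametric_intervalIntegral_of_continuous'
      (f := fun (x : S) t => f x (projIcc a b hab t))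
      (hf.comp_continuous (f := fun p : S × ℝ => ((p.1 : X), (projIcc a b hab p.2 : ℝ)))
        (by fun_prop) fun p => ⟨p.1.2, (projIcc a b hab p.2).2⟩) a b
  refine hproj.congr fun x => intervalIntegral.integral_congr fun t ht => ?_
  rw [uIcc_of_le hab] at ht
  simp only [projIcc_of_mem hab ht]

section ChangeOfVariables

variable {φ k : ℝ → ℝ}

theorem integral_comp_mul_deriv_of_contDiffAt {a b : ℝ}
    (hφ : ∀ s ∈ uIcc a b, ContDiffAt ℝ 1 φ s) (hk : ContinuousOn k (φ '' uIcc a b)) :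
    ∫ s in a..b, k (φ s) * deriv φ s = ∫ r in φ a..φ b, k r :=
  intervalIntegral.integral_comp_mul_deriv'
    (fun s hs => ((hφ s hs).differentiableAt one_ne_zero).hasDerivAt)
    (fun s hs => ((hφ s hs).derivWithin (m := 0) (by simp)).continuousAt.continuousWithinAt) hk

theorem integral_comp_mul_deriv_segment {y : ℝ} (hφ : ∀ s ∈ uIcc 0 y, ContDiffAt ℝ 1 φ s)
    (hφ0 : φ 0 = 0) (hk : ContinuousOn k (φ '' uIcc 0 y)) :
    ∫ t in (0 : ℝ)..1, k (φ (t * y)) * deriv φ (t * y) =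
      dslope φ 0 y * ∫ t in (0 : ℝ)..1, k (t * φ y) := by
  rcases eq_or_ne y 0 with rfl | hy
  · simp [hφ0, mul_comm]
  have hslope : y * dslope φ 0 y = φ y := by
    simpa [hφ0] using sub_smul_dslope φ 0 y
  refine mul_left_cancel₀ hy ?_
  calc y * ∫ t in (0 : ℝ)..1, k (φ (t * y)) * deriv φ (t * y)
      = ∫ s in (0 : ℝ)..y, k (φ s) * deriv φ s := by
        simpa using intervalIntegral.mul_integral_comp_mul_right
          (a := 0) (b := 1) (f := fun s => k (φ s) * deriv φ s) y
    _ = ∫ w in (0 : ℝ)..φ y, k w := by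
        rw [integral_comp_mul_deriv_of_contDiffAt hφ hk, hφ0]
    _ = φ y * ∫ t in (0 : ℝ)..1, k (t * φ y) := by
        simp
    _ = y * (dslope φ 0 y * ∫ t in (0 : ℝ)..1, k (t * φ y)) := by
        rw [← mul_assoc, hslope]

end ChangeOfVariables

theorem mul_mem_of_ordConnected {J : Set ℝ} {t y : ℝ} (hJ : J.OrdConnected) (h0 : 0 ∈ J)
    (hy : y ∈ J) (ht : t ∈ Icc (0 : ℝ) 1) : t * y ∈ J :=
  hJ.convex.smul_mem_of_zero_mem h0 hy ht

section Density

variable {h : ℝ → ℝ → ℝ} {I J : Set ℝ} {y : ℝ}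

theorem continuousOn_fiberMean (hh : ContinuousOn (uncurry h) (I ×ˢ J)) (hJ : J.OrdConnected)
    (h0J : 0 ∈ J) (hy : y ∈ J) : ContinuousOn (fun s => fiberMean h s y) I :=
  continuousOn_intervalIntegral_of_continuousOn_prod zero_le_one <|
    hh.comp (f := fun p : ℝ × ℝ => (p.1, p.2 * y)) (by fun_prop) fun _ hp =>
      ⟨hp.1, mul_mem_of_ordConnected hJ h0J hy hp.2⟩

theorem fiberMean_pos {s : ℝ} (hh : ContinuousOn (h s) J) (hpos : ∀ t ∈ J, 0 < h s t)
    (hJ : J.OrdConnected) (h0J : 0 ∈ J) (hy : y ∈ J) : 0 < fiberMean h s y := by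
  have hmem : ∀ t ∈ Icc (0 : ℝ) 1, t * y ∈ J := fun _ => mul_mem_of_ordConnected hJ h0J hy
  refine intervalIntegral.intervalIntegral_pos_of_pos_on
    (ContinuousOn.intervalIntegrable ?_) (fun t ht => hpos _ (hmem t (Ioo_subset_Icc_self ht)))
    one_pos
  rw [uIcc_of_le zero_le_one]
  exact hh.comp (by fun_prop) hmem

theorem strictMonoOn_normalizedVolume (hh : ContinuousOn (uncurry h) (I ×ˢ J))
    (hpos : ∀ s ∈ I, ∀ t ∈ J, 0 < h s t) (hI : I.OrdConnected) (hJ : J.OrdConnected)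
    (h0I : 0 ∈ I) (h0J : 0 ∈ J) (hy : y ∈ J) :
    StrictMonoOn (fun x => normalizedVolume h x y) I := by
  intro a ha b hb hab
  have hint : ∀ c ∈ I, ∀ d ∈ I, IntervalIntegrable (fun s => fiberMean h s y) volume c d :=
    fun c hc d hd => ((continuousOn_fiberMean hh hJ h0J hy).mono
      (hI.uIcc_subset hc hd)).intervalIntegrable
  have hmean : ∀ s ∈ Ioo a b, 0 < fiberMean h s y := fun s hs =>
    have hsI : s ∈ I := hI.out ha hb (Ioo_subset_Icc_self hs)
    fiberMean_pos (hh.uncurry_left s hsI) (hpos s hsI) hJ h0J hy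
  rw [← sub_pos]
  calc 0 < ∫ s in a..b, fiberMean h s y :=
        intervalIntegral.intervalIntegral_pos_of_pos_on (hint a ha b hb) hmean hab
    _ = normalizedVolume h b y - normalizedVolume h a y :=
        (intervalIntegral.integral_interval_sub_left (hint 0 h0I b hb) (hint 0 h0I a ha)).symm

theorem exists_nhds_eventually_strictMonoOn_normalizedVolume
    (hh : ∀ᶠ p in 𝓝 (0, 0), ContinuousAt (uncurry h) p) (hpos : 0 < h 0 0) :
    ∃ I ∈ 𝓝 (0 : ℝ), ∀ᶠ y in 𝓝 0, StrictMonoOn (fun x => normalizedVolume h x y) I := by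
  have hpos' : ∀ᶠ p in 𝓝 (0, 0), 0 < uncurry h p := hh.self_of_nhds.eventually_const_lt hpos
  obtain ⟨I, hI0, J, hJ0, hI, hJ, hIJ⟩ :=
    exists_ordConnected_nhds_of_eventually_prod (hh.and hpos')
  refine ⟨I, hI0, eventually_of_mem hJ0 fun y hy => ?_⟩
  exact strictMonoOn_normalizedVolume
    (fun p hp => (hIJ p.1 hp.1 p.2 hp.2).1.continuousWithinAt)
    (fun s hs t ht => (hIJ s hs t ht).2) hI hJ (mem_of_mem_nhds hI0) (mem_of_mem_nhds hJ0) hy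

end Density

section Equivalence

variable {h ht : ℝ → ℝ → ℝ} {φ₁ φ₂ : ℝ → ℝ}

theorem fiberMean_eq_dslope_mul {s y : ℝ}
    (hrel : ∀ t ∈ uIcc 0 y, h s t = ht (φ₁ s) (φ₂ t) * deriv φ₁ s * deriv φ₂ t)
    (hφ₂ : ∀ t ∈ uIcc 0 y, ContDiffAt ℝ 1 φ₂ t) (hφ₂0 : φ₂ 0 = 0)
    (hht : ContinuousOn (ht (φ₁ s)) (φ₂ '' uIcc 0 y)) :
    fiberMean h s y = dslope φ₂ 0 y * (fiberMean ht (φ₁ s) (φ₂ y) * deriv φ₁ s) := by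
  have hmem : ∀ t ∈ uIcc (0 : ℝ) 1, t * y ∈ uIcc 0 y := fun t h01 =>
    mul_mem_of_ordConnected ordConnected_uIcc left_mem_uIcc right_mem_uIcc
      (uIcc_of_le (zero_le_one' ℝ) ▸ h01)
  calc fiberMean h s y
      = ∫ t in (0 : ℝ)..1, ht (φ₁ s) (φ₂ (t * y)) * deriv φ₂ (t * y) * deriv φ₁ s :=
        intervalIntegral.integral_congr fun t h01 =>
          (hrel _ (hmem t h01)).trans (mul_right_comm _ _ _)
    _ = dslope φ₂ 0 y * (fiberMean ht (φ₁ s) (φ₂ y) * deriv φ₁ s) := by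
        rw [intervalIntegral.integral_mul_const, integral_comp_mul_deriv_segment hφ₂ hφ₂0 hht,
          mul_assoc, fiberMean]

theorem normalizedVolume_eq_dslope_mul {x y : ℝ} {I J : Set ℝ}
    (hrel : ∀ s ∈ uIcc 0 x, ∀ t ∈ uIcc 0 y,
      h s t = ht (φ₁ s) (φ₂ t) * deriv φ₁ s * deriv φ₂ t)
    (hφ₁ : ∀ s ∈ uIcc 0 x, ContDiffAt ℝ 1 φ₁ s) (hφ₂ : ∀ t ∈ uIcc 0 y, ContDiffAt ℝ 1 φ₂ t)
    (hφ₁0 : φ₁ 0 = 0) (hφ₂0 : φ₂ 0 = 0)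
    (hφ₁I : MapsTo φ₁ (uIcc 0 x) I) (hφ₂J : MapsTo φ₂ (uIcc 0 y) J)
    (hht : ContinuousOn (uncurry ht) (I ×ˢ J)) (hJ : J.OrdConnected) :
    normalizedVolume h x y = dslope φ₂ 0 y * normalizedVolume ht (φ₁ x) (φ₂ y) := by
  have hmean : ContinuousOn (fun r => fiberMean ht r (φ₂ y)) (φ₁ '' uIcc 0 x) :=
    (continuousOn_fiberMean hht hJ (hφ₂0 ▸ hφ₂J left_mem_uIcc) (hφ₂J right_mem_uIcc)).mono
      hφ₁I.image_subset
  calc normalizedVolume h x y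
      = ∫ s in (0 : ℝ)..x, dslope φ₂ 0 y * (fiberMean ht (φ₁ s) (φ₂ y) * deriv φ₁ s) :=
        intervalIntegral.integral_congr fun s hs =>
          fiberMean_eq_dslope_mul (hrel s hs) hφ₂ hφ₂0
            ((hht.uncurry_left _ (hφ₁I hs)).mono hφ₂J.image_subset)
    _ = dslope φ₂ 0 y * normalizedVolume ht (φ₁ x) (φ₂ y) := by
        rw [intervalIntegral.integral_const_mul, integral_comp_mul_deriv_of_contDiffAt hφ₁ hmean,
          hφ₁0, normalizedVolume]

theorem tendsto_prodMap_nhds_zero (hφ₁ : ContinuousAt φ₁ 0) (hφ₂ : ContinuousAt φ₂ 0)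
    (hφ₁0 : φ₁ 0 = 0) (hφ₂0 : φ₂ 0 = 0) :
    Tendsto (fun p : ℝ × ℝ => (φ₁ p.1, φ₂ p.2)) (𝓝 (0, 0)) (𝓝 (0, 0)) := by
  simpa [ContinuousAt, hφ₁0, hφ₂0, Prod.map_def] using hφ₁.prodMap' hφ₂

theorem eventually_normalizedVolume_eq_dslope_mul
    (hht : ∀ᶠ p in 𝓝 (0, 0), ContinuousAt (uncurry ht) p)
    (hφ₁ : ContDiffAt ℝ 1 φ₁ 0) (hφ₂ : ContDiffAt ℝ 1 φ₂ 0) (hφ₁0 : φ₁ 0 = 0) (hφ₂0 : φ₂ 0 = 0)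
    (hrel : ∀ᶠ p : ℝ × ℝ in 𝓝 (0, 0),
      h p.1 p.2 = ht (φ₁ p.1) (φ₂ p.2) * deriv φ₁ p.1 * deriv φ₂ p.2) :
    ∀ᶠ p : ℝ × ℝ in 𝓝 (0, 0), normalizedVolume h p.1 p.2 =
      dslope φ₂ 0 p.2 * normalizedVolume ht (φ₁ p.1) (φ₂ p.2) := by
  obtain ⟨I, hI0, J, hJ0, -, hJ, hIJ⟩ := exists_ordConnected_nhds_of_eventually_prod hht
  have hφIJ : ∀ᶠ p : ℝ × ℝ in 𝓝 (0, 0), (φ₁ p.1, φ₂ p.2) ∈ I ×ˢ J :=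
    (tendsto_prodMap_nhds_zero hφ₁.continuousAt hφ₂.continuousAt hφ₁0 hφ₂0).eventually
      (prod_mem_nhds hI0 hJ0)
  have hsmooth : ∀ᶠ p : ℝ × ℝ in 𝓝 (0, 0), ContDiffAt ℝ 1 φ₁ p.1 ∧ ContDiffAt ℝ 1 φ₂ p.2 :=
    (hφ₁.eventually (by simp)).prodMk_nhds (hφ₂.eventually (by simp))
  obtain ⟨A, hA0, B, hB0, hA, hB, hAB⟩ :=
    exists_ordConnected_nhds_of_eventually_prod (hrel.and (hφIJ.and hsmooth))
  have h0A := mem_of_mem_nhds hA0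
  have h0B := mem_of_mem_nhds hB0
  filter_upwards [prod_mem_nhds hA0 hB0] with p hp
  have hsubA : uIcc 0 p.1 ⊆ A := hA.uIcc_subset h0A hp.1
  have hsubB : uIcc 0 p.2 ⊆ B := hB.uIcc_subset h0B hp.2
  exact normalizedVolume_eq_dslope_mul
    (fun s hs t ht => (hAB s (hsubA hs) t (hsubB ht)).1)
    (fun s hs => (hAB s (hsubA hs) 0 h0B).2.2.1) (fun t ht => (hAB 0 h0A t (hsubB ht)).2.2.2)
    hφ₁0 hφ₂0
    (fun s hs => (hAB s (hsubA hs) 0 h0B).2.1.1) (fun t ht => (hAB 0 h0A t (hsubB ht)).2.1.2)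
    (fun q hq => (hIJ q.1 hq.1 q.2 hq.2).continuousWithinAt) hJ

end Equivalence

theorem IsReflectionGerm.tendsto {h ρ : ℝ → ℝ → ℝ} (hρ : IsReflectionGerm h ρ) :
    Tendsto (uncurry ρ) (𝓝 (0, 0)) (𝓝 0) := by
  simpa [ContinuousAt, hρ.map_zero] using hρ.continuousAt

theorem eventually_dslope_ne_zero {φ : ℝ → ℝ} {a : ℝ} (hφ : deriv φ a ≠ 0) :
    ∀ᶠ y in 𝓝 a, dslope φ a y ≠ 0 :=
  (continuousAt_dslope_same.mpr (differentiableAt_of_deriv_ne_zero hφ)).eventually_ne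
    (by rwa [dslope_same])

theorem stmt13_general {h ht ρ ρt : ℝ → ℝ → ℝ} {φ₁ φ₂ : ℝ → ℝ}
    (hht : ∀ᶠ p in 𝓝 (0, 0), ContinuousAt (uncurry ht) p) (htpos : 0 < ht 0 0)
    (hφ₁ : ContDiffAt ℝ 1 φ₁ 0) (hφ₂ : ContDiffAt ℝ 1 φ₂ 0) (hφ₁0 : φ₁ 0 = 0) (hφ₂0 : φ₂ 0 = 0)
    (hφ₂d : deriv φ₂ 0 ≠ 0)
    (hrel : ∀ᶠ p : ℝ × ℝ in 𝓝 (0, 0),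
      h p.1 p.2 = ht (φ₁ p.1) (φ₂ p.2) * deriv φ₁ p.1 * deriv φ₂ p.2)
    (hρ : IsReflectionGerm h ρ) (hρt : IsReflectionGerm ht ρt) :
    ∀ᶠ p : ℝ × ℝ in 𝓝 (0, 0), φ₁ (ρ p.1 p.2) = ρt (φ₁ p.1) (φ₂ p.2) := by
  have hvol := eventually_normalizedVolume_eq_dslope_mul hht hφ₁ hφ₂ hφ₁0 hφ₂0 hrel
  obtain ⟨I, hI0, hmono⟩ := exists_nhds_eventually_strictMonoOn_normalizedVolume hht htpos
  have hφ := tendsto_prodMap_nhds_zero hφ₁.continuousAt hφ₂.continuousAt hφ₁0 hφ₂0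
  have hsnd : Tendsto Prod.snd (𝓝 ((0 : ℝ), (0 : ℝ))) (𝓝 0) := continuousAt_snd
  have hρsnd : Tendsto (fun p : ℝ × ℝ => (ρ p.1 p.2, p.2)) (𝓝 (0, 0)) (𝓝 (0, 0)) :=
    hρ.tendsto.prodMk_nhds hsnd
  filter_upwards [hvol, hρsnd.eventually hvol, hsnd.eventually (eventually_dslope_ne_zero hφ₂d),
    hρ.eventually_add_eq_zero, hφ.eventually hρt.eventually_add_eq_zero,
    hφ.eventually (hsnd.eventually hmono), (hφ.comp hρsnd).eventually (prod_mem_nhds hI0 univ_mem),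
    (hρt.tendsto.comp hφ).eventually hI0] with p hp hρp hslope hadd hadd_t hmono_p hφρI hρtI
  rw [hp, hρp, ← mul_add] at hadd
  have hadd' := (mul_eq_zero.mp hadd).resolve_left hslope
  exact hmono_p.injOn hφρI.1 hρtI (add_left_cancel (hadd'.trans hadd_t.symm))

/-- Volume-preserving reflections of planar divergence-free 2-webs are
conjugated by local equivalences: if `h(x,y) = h̃(φ₁(x),φ₂(y))·φ₁'(x)·φ₂'(y)` and
`ρ`, `ρ̃` are the reflection functions of the webs with densities `h`, `h̃`, then
`φ₁(ρ(x,y)) = ρ̃(φ₁(x),φ₂(y))` near the origin. -/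
theorem stmt13
    (h ht : ℝ → ℝ → ℝ) (φ₁ φ₂ : ℝ → ℝ)
    (V Vt : Set (ℝ × ℝ)) (hV : IsOpen V) (h0V : ((0:ℝ), (0:ℝ)) ∈ V)
    (hVt : IsOpen Vt) (h0Vt : ((0:ℝ), (0:ℝ)) ∈ Vt)
    (hsm : ContDiffOn ℝ (⊤ : ℕ∞) (fun p : ℝ × ℝ => h p.1 p.2) V)
    (hpos : ∀ p ∈ V, 0 < h (Prod.fst p) (Prod.snd p))
    (htsm : ContDiffOn ℝ (⊤ : ℕ∞) (fun p : ℝ × ℝ => ht p.1 p.2) Vt)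
    (htpos : ∀ p ∈ Vt, 0 < ht (Prod.fst p) (Prod.snd p))
    (V₁ V₂ : Set ℝ) (hV₁ : IsOpen V₁) (h0V₁ : (0:ℝ) ∈ V₁)
    (hV₂ : IsOpen V₂) (h0V₂ : (0:ℝ) ∈ V₂)
    (hφ₁sm : ContDiffOn ℝ (⊤ : ℕ∞) φ₁ V₁) (hφ₂sm : ContDiffOn ℝ (⊤ : ℕ∞) φ₂ V₂)
    (hφ₁0 : φ₁ 0 = 0) (hφ₂0 : φ₂ 0 = 0)
    (hφ₁d : ∀ x ∈ V₁, 0 < deriv φ₁ x) (hφ₂d : ∀ y ∈ V₂, 0 < deriv φ₂ y)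
    (hrel : ∀ x ∈ V₁, ∀ y ∈ V₂,
      h x y = ht (φ₁ x) (φ₂ y) * deriv φ₁ x * deriv φ₂ y)
    (ρ ρt : ℝ → ℝ → ℝ)
    (W Wt : Set (ℝ × ℝ)) (hW : IsOpen W) (h0W : ((0:ℝ), (0:ℝ)) ∈ W)
    (hWt : IsOpen Wt) (h0Wt : ((0:ℝ), (0:ℝ)) ∈ Wt)
    (hρsm : ContDiffOn ℝ (⊤ : ℕ∞) (fun p : ℝ × ℝ => ρ p.1 p.2) W)
    (hρtsm : ContDiffOn ℝ (⊤ : ℕ∞) (fun p : ℝ × ℝ => ρt p.1 p.2) Wt)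
    (hρ0 : ρ 0 0 = 0) (hρt0 : ρt 0 0 = 0)
    (hρ : ∀ p ∈ W, (∫ s in (0:ℝ)..(Prod.fst p), ∫ t in (0:ℝ)..(1:ℝ), h s (t * p.2))
      + (∫ s in (0:ℝ)..(ρ p.1 p.2), ∫ t in (0:ℝ)..(1:ℝ), h s (t * p.2)) = 0)
    (hρt : ∀ p ∈ Wt, (∫ s in (0:ℝ)..(Prod.fst p), ∫ t in (0:ℝ)..(1:ℝ), ht s (t * p.2))
      + (∫ s in (0:ℝ)..(ρt p.1 p.2), ∫ t in (0:ℝ)..(1:ℝ), ht s (t * p.2)) = 0) :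
    ∃ N : Set (ℝ × ℝ), IsOpen N ∧ ((0:ℝ), (0:ℝ)) ∈ N ∧
      ∀ p ∈ N, φ₁ (ρ (Prod.fst p) (Prod.snd p)) = ρt (φ₁ p.1) (φ₂ p.2) := by
  obtain ⟨N, hN, hNo, h0N⟩ := eventually_nhds_iff.mp <| stmt13_general
    (eventually_of_mem (hVt.mem_nhds h0Vt) fun p hp =>
      htsm.continuousOn.continuousAt (hVt.mem_nhds hp))
    (htpos _ h0Vt)
    ((hφ₁sm.contDiffAt (hV₁.mem_nhds h0V₁)).of_le (by simp))
    ((hφ₂sm.contDiffAt (hV₂.mem_nhds h0V₂)).of_le (by simp)) hφ₁0 hφ₂0 (hφ₂d 0 h0V₂).ne'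
    (eventually_of_mem (prod_mem_nhds (hV₁.mem_nhds h0V₁) (hV₂.mem_nhds h0V₂))
      fun p hp => hrel p.1 hp.1 p.2 hp.2)
    ⟨hρsm.continuousOn.continuousAt (hW.mem_nhds h0W), hρ0,
      eventually_of_mem (hW.mem_nhds h0W) hρ⟩
    ⟨hρtsm.continuousOn.continuousAt (hWt.mem_nhds h0Wt), hρt0,
      eventually_of_mem (hWt.mem_nhds h0Wt) hρt⟩
  exact ⟨N, hNo, h0N, hN⟩
end
end

section
/- Let m ≥ 2, let U ⊆ ℝ^m be an open box (a product of open intervals), and let h : U → ℝ be smooth and positive. Then the following are equivalent: (a) ∂²(log h)/∂x_i∂x_j ≡ 0 on U for all pairs i ≠ j; (b) for every closed box K = ∏_{k=1}^m [a_k,b_k] ⊆ U, every pair of distinct indices i ≠ j, and every p_i ∈ [a_i,b_i], p_j ∈ [a_j,b_j], the four quantities V_{st} (s,t ∈ {+,−}), defined as the integrals of h over ∏_k I_k with I_i = [p_i,b_i] if s = + and [a_i,p_i] if s = −, I_j = [p_j,b_j] if t = + and [a_j,p_j] if t = −, and I_k = [a_k,b_k] for k ∉ {i,j}, satisfy V_{−+}·V_{+−}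 = V_{++}·V_{−−}. -/
open MeasureTheory

noncomputable section

/-- Second mixed partial derivative `∂²(log h)/∂x_i∂x_j` at `x`. -/
def logpd2 {m : ℕ} (h : (Fin m → ℝ) → ℝ) (k l : Fin m) (x : Fin m → ℝ) : ℝ :=
  fderiv ℝ (fun y => fderiv ℝ (fun z => Real.log (h z)) y (Pi.single k (1:ℝ)))
    x (Pi.single l 1)

/-- The `h`-volume `V_{st}` of the subbox of `K = ∏_k [a_k,b_k]` determined by the signs
`s` (for coordinate `i`: `+` gives `[p,b_i]`, `−` gives `[a_i,p]`) and `t` (likewise for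
coordinate `j` with `q`), the remaining factors being `[a_k,b_k]`. -/
def subboxVol {m : ℕ} (h : (Fin m → ℝ) → ℝ) (i j : Fin m) (a b : Fin m → ℝ)
    (p q : ℝ) (s t : Bool) : ℝ :=
  ∫ x in Set.Icc
      (fun k => if k = i then (if s then p else a i)
        else if k = j then (if t then q else a j) else a k)
      (fun k => if k = i then (if s then b i else p)
        else if k = j then (if t then b j else q) else b k),
    h x

/-!
If all mixed second partials of `L = log h` vanish, then `∂L/∂x_k` depends on `x_k` alone, so `L`
minus the sum of its restrictions to the coordinate lines through a base point has zero gradient.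
Hence `h` is a product of functions of one variable, the `h`-volume of a box is a product over its
sides, and `V_{−+} V_{+−} = V_{++} V_{−−}`.

Conversely, `V_{−+} V_{+−} = V_{++} V_{−−}` says that the ratio of the volumes over two adjacent
`j`-sides is the same for two adjacent `i`-sides. Positivity makes these equalities transitive, so
they hold for sides that are far apart too. Shrinking the four boxes to points turns them into
`h(x) h(x + s e_i + t e_j) = h(x + s e_i) h(x + t e_j)`, and differentiating the logarithm in `s`
and then in `t` at `0` gives the vanishing of the mixed partial.
-/

section

open Set Function Filter Topology

section Calculus

variable {ι : Type*} [DecidableEq ι]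

lemma update_update_mem_univ_pi {X : ι → Type*} {I : ∀ k, Set (X k)} {x : ∀ k, X k}
    (hx : x ∈ univ.pi I) {i j : ι} {α : X i} {γ : X j} (hα : α ∈ I i) (hγ : γ ∈ I j) :
    update (update x j γ) i α ∈ univ.pi I :=
  (update_mem_pi_iff_of_mem ((update_mem_pi_iff_of_mem hx).2 fun _ => hγ)).2 fun _ => hα

lemma update_update_apply_self {X : ι → Type*} {i j : ι} (hij : i ≠ j) (x : ∀ k, X k) (γ : X j) :
    update (update x j γ) i (x i) = update x j γ := by
  rw [update_comm hij.symm, update_eq_self]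

lemma add_smul_single_one {R : Type*} [Semiring R] (x : ι → R) (k : ι) (t : R) :
    x + t • Pi.single k 1 = update x k (x k + t) := by
  ext l
  rcases eq_or_ne l k with rfl | hl <;> simp [*]

lemma eq_of_partials_eq_zero [Finite ι] {U : Set (ι → ℝ)} (hconv : Convex ℝ U) (hU : IsOpen U)
    {f : (ι → ℝ) → ℝ} (hf : DifferentiableOn ℝ f U) {x y : ι → ℝ} (hx : x ∈ U) (hy : y ∈ U)
    (hpartial : ∀ k, x k ≠ y k → ∀ z ∈ U, fderiv ℝ f z (Pi.single k 1) = 0) : f x = f y := by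
  cases nonempty_fintype ι
  obtain ⟨z, hz, hmvt⟩ := domain_mvt
    (fun w hw => (hf.differentiableAt (hU.mem_nhds hw)).hasFDerivAt.hasFDerivWithinAt) hconv hx hy
  suffices fderiv ℝ f z (y - x) = 0 by linarith
  rw [pi_eq_sum_univ' (y - x), map_sum]
  refine Finset.sum_eq_zero fun k _ => ?_
  rcases eq_or_ne (x k) (y k) with hk | hk
  · simp [hk]
  · rw [map_smul, hpartial k hk z (hconv.segment_subset hx hy hz), smul_zero]

lemma hasFDerivAt_comp_update_apply [Finite ι] {f : (ι → ℝ) → ℝ} {x₀ z : ι → ℝ} {k : ι}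
    (hf : DifferentiableAt ℝ f (update x₀ k (z k))) :
    HasFDerivAt (fun y => f (update x₀ k (y k)))
      (fderiv ℝ f (update x₀ k (z k)) (Pi.single k 1) • ContinuousLinearMap.proj (R := ℝ) k) z := by
  cases nonempty_fintype ι
  have hupdate : HasFDerivAt (fun y : ι → ℝ => update x₀ k (y k))
      ((ContinuousLinearMap.proj (R := ℝ) k).smulRight (Pi.single k (1 : ℝ))) z := by
    have hline : (fun y : ι → ℝ => update x₀ k (y k)) =
        fun y => x₀ + (y k - x₀ k) • Pi.single k 1 := by
      simp only [add_smul_single_one, add_sub_cancel]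
    rw [hline]
    exact (((hasFDerivAt_apply k z).sub_const (x₀ k)).smul_const (Pi.single k 1)).const_add x₀
  refine (hf.hasFDerivAt.comp z hupdate).congr_fderiv ?_
  ext v
  simp [mul_comm]

lemma differentiableOn_fderiv_apply {E F : Type*} [NormedAddCommGroup E]
    [NormedSpace ℝ E] [NormedAddCommGroup F] [NormedSpace ℝ F] {U : Set E} (hU : IsOpen U)
    {f : E → F} (hf : ContDiffOn ℝ 2 f U) (v : E) :
    DifferentiableOn ℝ (fun y => fderiv ℝ f y v) U :=
  ((hf.fderiv_of_isOpen hU (m := 1) (by norm_num)).differentiableOn (by norm_num)).clm_apply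
    (differentiableOn_const v)

lemma eq_add_sum_of_mixed_partials_eq_zero [Fintype ι] {I : ι → Set ℝ} (hI : ∀ k, IsOpen (I k))
    (hIconv : ∀ k, Convex ℝ (I k)) {f : (ι → ℝ) → ℝ} (hf : ContDiffOn ℝ 2 f (univ.pi I))
    (hmixed : ∀ i j, i ≠ j → ∀ x ∈ univ.pi I,
      fderiv ℝ (fun y => fderiv ℝ f y (Pi.single i 1)) x (Pi.single j 1) = 0)
    {x₀ x : ι → ℝ} (hx₀ : x₀ ∈ univ.pi I) (hx : x ∈ univ.pi I) :
    f x = f x₀ + ∑ k, (f (update x₀ k (x k)) - f x₀) := by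
  have hU : IsOpen (univ.pi I) := isOpen_set_pi finite_univ fun k _ => hI k
  have hconv : Convex ℝ (univ.pi I) := convex_pi fun k _ => hIconv k
  have hdiff : ∀ z ∈ univ.pi I, DifferentiableAt ℝ f z := fun z hz =>
    (hf.differentiableOn (by norm_num)).differentiableAt (hU.mem_nhds hz)
  have hslice : ∀ z ∈ univ.pi I, ∀ k, update x₀ k (z k) ∈ univ.pi I := fun z hz k =>
    (update_mem_pi_iff_of_mem hx₀).2 fun _ => hz k trivial
  have hpartial : ∀ z ∈ univ.pi I, ∀ k, fderiv ℝ f z (Pi.single k 1) =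
      fderiv ℝ f (update x₀ k (z k)) (Pi.single k 1) := fun z hz k =>
    eq_of_partials_eq_zero hconv hU (differentiableOn_fderiv_apply hU hf _) hz (hslice z hz k)
      fun j hj => hmixed k j fun hkj => hj (by simp [← hkj])
  have hderiv : ∀ z ∈ univ.pi I, HasFDerivAt (fun y => f y - ∑ k, f (update x₀ k (y k)))
      (fderiv ℝ f z - ∑ k, fderiv ℝ f (update x₀ k (z k)) (Pi.single k 1) •
        ContinuousLinearMap.proj (R := ℝ) k) z := fun z hz =>
    (hdiff z hz).hasFDerivAt.sub <| HasFDerivAt.fun_sum fun k _ =>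
      hasFDerivAt_comp_update_apply (hdiff _ (hslice z hz k))
  have hconst := eq_of_partials_eq_zero hconv hU
    (fun z hz => (hderiv z hz).differentiableAt.differentiableWithinAt) hx hx₀ fun j _ z hz => by
      simp [(hderiv z hz).fderiv, hpartial z hz j, Pi.single_apply]
  simp only [update_eq_self] at hconst
  rw [Finset.sum_sub_distrib]
  linarith

end Calculus

section Derivatives

variable {E F : Type*} [NormedAddCommGroup E] [NormedSpace ℝ E]
  [NormedAddCommGroup F] [NormedSpace ℝ F]

lemma eventually_add_smul_mem {U : Set E} (hU : IsOpen U) {x : E} (hx : x ∈ U) (v : E) :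
    ∀ᶠ ε in 𝓝[>] (0 : ℝ), x + ε • v ∈ U :=
  nhdsWithin_le_nhds <| (Continuous.tendsto' (by fun_prop) 0 x (by simp)).eventually
    (hU.mem_nhds hx)

lemma fderiv_apply_eq_of_eventually_sub_eq {f g : E → F} {x y v : E}
    (hf : DifferentiableAt ℝ f x) (hg : DifferentiableAt ℝ g y)
    (hfg : ∀ᶠ s in 𝓝[>] (0 : ℝ), f (x + s • v) - f x = g (y + s • v) - g y) :
    fderiv ℝ f x v = fderiv ℝ g y v :=
  tendsto_nhds_unique
    ((hf.hasFDerivAt.hasLineDerivAt v).tendsto_slope_zero_right.congr' <| by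
      filter_upwards [hfg] with s hs using by rw [hs])
    (hg.hasFDerivAt.hasLineDerivAt v).tendsto_slope_zero_right

lemma fderiv_fderiv_apply_eq_zero_of_eventually_sub_eq {U : Set E} (hU : IsOpen U) {f : E → F}
    (hf : ContDiffOn ℝ 2 f U) {x : E} (hx : x ∈ U) {u v : E}
    (hfour : ∀ᶠ t in 𝓝[>] (0 : ℝ), ∀ᶠ s in 𝓝[>] (0 : ℝ),
      f (x + t • v + s • u) - f (x + t • v) = f (x + s • u) - f x) :
    fderiv ℝ (fun y => fderiv ℝ f y u) x v = 0 := by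
  have hdiff : ∀ y ∈ U, DifferentiableAt ℝ f y := fun y hy =>
    (hf.differentiableOn (by norm_num)).differentiableAt (hU.mem_nhds hy)
  have hconst : ∀ᶠ t in 𝓝[>] (0 : ℝ), fderiv ℝ f (x + t • v) u = fderiv ℝ f x u := by
    filter_upwards [hfour, eventually_add_smul_mem hU hx v] with t ht htU
    exact fderiv_apply_eq_of_eventually_sub_eq (hdiff _ htU) (hdiff x hx) ht
  rw [fderiv_apply_eq_of_eventually_sub_eq (g := fun _ => (0 : F)) (y := x)
    ((differentiableOn_fderiv_apply hU hf u).differentiableAt (hU.mem_nhds hx))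
    (differentiableAt_const _) (by filter_upwards [hconst] with t ht using by simp [ht])]
  simp

end Derivatives

section BoxIntegrals

variable {ι : Type*} [Fintype ι]

lemma setIntegral_Icc_pos {h : (ι → ℝ) → ℝ} {a b : ι → ℝ} (hab : ∀ k, a k < b k)
    (hcont : ContinuousOn h (Icc a b)) (hpos : ∀ x ∈ Icc a b, 0 < h x) :
    0 < ∫ x in Icc a b, h x := by
  have hnonneg : 0 ≤ᵐ[volume.restrict (Icc a b)] h := by
    filter_upwards [ae_restrict_mem measurableSet_Icc] with x hx using (hpos x hx).le
  rw [setIntegral_pos_iff_support_of_nonneg_ae hnonneg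
      (hcont.integrableOn_compact isCompact_Icc),
    inter_eq_right.2 fun x hx => mem_support.2 (hpos x hx).ne', Real.volume_Icc_pi, pos_iff_ne_zero,
    Finset.prod_ne_zero_iff]
  intro k _
  simp [hab k]

lemma tendsto_integral_cube {h : (ι → ℝ) → ℝ} {y : ι → ℝ} (hcont : ContinuousAt h y)
    (hmeas : StronglyMeasurableAtFilter h (𝓝 y)) :
    Tendsto (fun ε : ℝ => (ε ^ Fintype.card ι)⁻¹ * ∫ x in Icc y (y + ε • 1), h x)
      (𝓝[>] 0) (𝓝 (h y)) := by
  have hshrink : Tendsto (fun ε : ℝ => Icc y (y + ε • 1)) (𝓝[>] 0) (𝓝 y).smallSets :=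
    tendsto_const_nhds.Icc
      ((Continuous.tendsto' (by fun_prop) 0 y (by simp)).mono_left nhdsWithin_le_nhds)
  have hvol : (fun ε : ℝ => volume.real (Icc y (y + ε • 1))) =ᶠ[𝓝[>] 0]
      fun ε => ε ^ Fintype.card ι := by
    filter_upwards [self_mem_nhdsWithin] with ε hε
    have hle : y ≤ y + ε • 1 := fun k => by simpa using hε.le
    simp [Measure.real, Real.volume_Icc_pi_toReal hle]
  have hlim := (hcont.integral_sub_linear_isLittleO_ae hmeas hshrink _ hvol).tendsto_div_nhds_zero
  refine (zero_add (h y) ▸ hlim.add_const (h y)).congr' ?_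
  filter_upwards [self_mem_nhdsWithin] with ε hε
  have hne : ε ^ Fintype.card ι ≠ 0 := pow_ne_zero _ (ne_of_gt hε)
  rw [smul_eq_mul]
  field_simp
  ring

/-- The density `h` agrees on `U` with a constant times a product of functions of one coordinate
each: the web of coordinate hyperplanes with volume form `h dx` is trivial on `U`. The constant
matters only when there are no coordinates. -/
def IsProductDensityOn (h : (ι → ℝ) → ℝ) (U : Set (ι → ℝ)) : Prop :=
  ∃ (C : ℝ) (g : ι → ℝ → ℝ), ∀ x ∈ U, h x = C * ∏ k, g k (x k)

lemma IsProductDensityOn.mono {h : (ι → ℝ) → ℝ} {U V : Set (ι → ℝ)}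
    (hh : IsProductDensityOn h U) (hVU : V ⊆ U) : IsProductDensityOn h V :=
  let ⟨C, g, hg⟩ := hh
  ⟨C, g, fun x hx => hg x (hVU hx)⟩

lemma setIntegral_Icc_eq_mul_prod {h : (ι → ℝ) → ℝ} {a b : ι → ℝ} {C : ℝ} {g : ι → ℝ → ℝ}
    (hg : ∀ x ∈ Icc a b, h x = C * ∏ k, g k (x k)) :
    ∫ x in Icc a b, h x = C * ∏ k, ∫ u in Icc (a k) (b k), g k u := by
  rw [setIntegral_congr_fun measurableSet_Icc hg, integral_const_mul, ← pi_univ_Icc, volume_pi,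
    Measure.restrict_pi_pi, integral_fintype_prod_eq_prod]

variable [DecidableEq ι]

/-- The `h`-volume of the box with side `[α, β]` in direction `i`, side `[γ, δ]` in direction `j`
and side `[a_k, b_k]` in every other direction `k`, for `i ≠ j`. -/
def boxVol (h : (ι → ℝ) → ℝ) (i j : ι) (a b : ι → ℝ) (α β γ δ : ℝ) : ℝ :=
  ∫ x in Icc (update (update a j γ) i α) (update (update b j δ) i β), h x

lemma boxVol_update_update (h : (ι → ℝ) → ℝ) {i j : ι} (hij : i ≠ j) (a b : ι → ℝ)
    (α' β' γ' δ' α β γ δ : ℝ) :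
    boxVol h i j (update (update a j γ') i α') (update (update b j δ') i β') α β γ δ =
      boxVol h i j a b α β γ δ := by
  simp only [boxVol, update_comm hij.symm, update_idem]

lemma boxVol_add_smul_one (h : (ι → ℝ) → ℝ) (i j : ι) (x : ι → ℝ) (ε α γ : ℝ) :
    boxVol h i j x (x + ε • 1) α (α + ε) γ (γ + ε) = ∫ y in
      Icc (update (update x j γ) i α) (update (update x j γ) i α + ε • 1), h y := by
  have hcorner : update (update (x + ε • 1) j (γ + ε)) i (α + ε) =
      update (update x j γ) i α + ε • 1 := by
    ext k
    simp only [update_apply, Pi.add_apply, Pi.smul_apply, Pi.one_apply, smul_eq_mul, mul_one]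
    split_ifs <;> rfl
  rw [boxVol, hcorner]

lemma subboxVol_eq_boxVol {m : ℕ} (h : (Fin m → ℝ) → ℝ) (i j : Fin m) (a b : Fin m → ℝ)
    (p q : ℝ) (s t : Bool) :
    subboxVol h i j a b p q s t = boxVol h i j a b (if s then p else a i) (if s then b i else p)
      (if t then q else a j) (if t then b j else q) := by
  unfold subboxVol boxVol
  congr! 3 <;> ext k <;> simp only [update_apply]

lemma IsProductDensityOn.exists_boxVol_eq_mul {h : (ι → ℝ) → ℝ} {a b : ι → ℝ}
    (hh : IsProductDensityOn h (Icc a b)) {i j : ι} (hij : i ≠ j) :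
    ∃ A B : ℝ → ℝ → ℝ, ∀ {α β γ δ : ℝ}, a i ≤ α → β ≤ b i → a j ≤ γ → δ ≤ b j →
      boxVol h i j a b α β γ δ = A α β * B γ δ := by
  obtain ⟨C, g, hg⟩ := hh
  refine ⟨fun α β => ∫ u in Icc α β, g i u, fun γ δ => C * ((∫ u in Icc γ δ, g j u) *
    ∏ k ∈ (Finset.univ.erase i).erase j, ∫ u in Icc (a k) (b k), g k u),
    fun {α β γ δ} hα hβ hγ hδ => ?_⟩
  have hsub : Icc (update (update a j γ) i α) (update (update b j δ) i β) ⊆ Icc a b :=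
    Icc_subset_Icc
      (le_update_iff.2 ⟨hα, fun k _ => le_update_iff.2 ⟨hγ, fun _ _ => le_rfl⟩ k⟩)
      (update_le_iff.2 ⟨hβ, fun k _ => update_le_iff.2 ⟨hδ, fun _ _ => le_rfl⟩ k⟩)
  have hrest : ∏ k ∈ (Finset.univ.erase i).erase j, ∫ u in
      Icc (update (update a j γ) i α k) (update (update b j δ) i β k), g k u =
      ∏ k ∈ (Finset.univ.erase i).erase j, ∫ u in Icc (a k) (b k), g k u :=
    Finset.prod_congr rfl fun k hk => by
      obtain ⟨hkj, hki, -⟩ := by simpa only [Finset.mem_erase] using hk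
      simp only [update_of_ne hki, update_of_ne hkj]
  rw [boxVol, setIntegral_Icc_eq_mul_prod fun x hx => hg x (hsub hx),
    ← Finset.mul_prod_erase Finset.univ _ (Finset.mem_univ i),
    ← Finset.mul_prod_erase (Finset.univ.erase i) _
      (Finset.mem_erase.2 ⟨hij.symm, Finset.mem_univ j⟩), hrest]
  simp only [update_self, update_of_ne hij.symm]
  ring

end BoxIntegrals

section Tabachnikov

variable {m : ℕ}

/-- Tabachnikov's condition `ac = bd` on `U`, for all closed boxes in `U` subdivided by one leaf of
each of two of the coordinate foliations. -/
def TabachnikovCondition (h : (Fin m → ℝ) → ℝ) (U : Set (Fin m → ℝ)) : Prop :=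
  ∀ a b : Fin m → ℝ, Icc a b ⊆ U → ∀ i j : Fin m, i ≠ j →
    ∀ p ∈ Icc (a i) (b i), ∀ q ∈ Icc (a j) (b j),
      subboxVol h i j a b p q false true * subboxVol h i j a b p q true false =
        subboxVol h i j a b p q true true * subboxVol h i j a b p q false false

lemma IsProductDensityOn.tabachnikovCondition {h : (Fin m → ℝ) → ℝ} {U : Set (Fin m → ℝ)}
    (hh : IsProductDensityOn h U) : TabachnikovCondition h U := by
  intro a b hab i j hij p hp q hq
  obtain ⟨A, B, hAB⟩ := (hh.mono hab).exists_boxVol_eq_mul hij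
  simp only [subboxVol_eq_boxVol, Bool.false_eq_true, if_true, if_false]
  rw [hAB le_rfl hp.2 hq.1 le_rfl, hAB hp.1 le_rfl le_rfl hq.2, hAB hp.1 le_rfl hq.1 le_rfl,
    hAB le_rfl hp.2 le_rfl hq.2]
  ring

lemma isProductDensityOn_of_logpd2_eq_zero {I : Fin m → Set ℝ} (hI : ∀ k, IsOpen (I k))
    (hIconv : ∀ k, Convex ℝ (I k)) {h : (Fin m → ℝ) → ℝ}
    (hlog : ContDiffOn ℝ 2 (fun x => Real.log (h x)) (univ.pi I))
    (hpos : ∀ x ∈ univ.pi I, 0 < h x)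
    (hmixed : ∀ i j, i ≠ j → ∀ x ∈ univ.pi I, logpd2 h i j x = 0) :
    IsProductDensityOn h (univ.pi I) := by
  rcases (univ.pi I).eq_empty_or_nonempty with hempty | ⟨x₀, hx₀⟩
  · exact ⟨0, 0, by simp [hempty]⟩
  refine ⟨h x₀, fun k u => h (update x₀ k u) / h x₀, fun x hx => ?_⟩
  have hslice : ∀ k, 0 < h (update x₀ k (x k)) := fun k =>
    hpos _ ((update_mem_pi_iff_of_mem hx₀).2 fun _ => hx k trivial)
  calc h x = Real.exp (Real.log (h x)) := (Real.exp_log (hpos x hx)).symm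
    _ = Real.exp (Real.log (h x₀) + ∑ k, (Real.log (h (update x₀ k (x k))) - Real.log (h x₀))) := by
      rw [eq_add_sum_of_mixed_partials_eq_zero hI hIconv hlog hmixed hx₀ hx]
    _ = h x₀ * ∏ k, h (update x₀ k (x k)) / h x₀ := by
      simp only [Real.exp_add, Real.exp_sum, Real.exp_sub, Real.exp_log (hpos x₀ hx₀),
        Real.exp_log (hslice _)]

lemma mul_eq_mul_trans {R : Type*} [CommRing R] [IsDomain R] {a₁ a₂ a₃ b₁ b₂ b₃ : R}
    (ha : a₂ ≠ 0) (hb : b₂ ≠ 0) (h₁₂ : a₁ * b₂ = a₂ * b₁) (h₂₃ : a₂ * b₃ = a₃ * b₂) :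
    a₁ * b₃ = a₃ * b₁ :=
  mul_left_cancel₀ (mul_ne_zero ha hb) (by linear_combination a₂ * b₃ * h₁₂ + a₂ * b₁ * h₂₃)

lemma mul_eq_mul_of_adjacent {σ τ R : Type*} [Preorder σ] [Preorder τ] [CommRing R] [IsDomain R]
    {S : Set σ} {T : Set τ} {F : σ → σ → τ → τ → R}
    (hF : ∀ α ∈ S, ∀ β ∈ S, ∀ γ ∈ T, ∀ δ ∈ T, α < β → γ < δ → F α β γ δ ≠ 0)
    (hadj : ∀ α ∈ S, ∀ p ∈ S, ∀ β ∈ S, ∀ γ ∈ T, ∀ q ∈ T, ∀ δ ∈ T,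
      α < p → p < β → γ < q → q < δ → F α p γ q * F p β q δ = F p β γ q * F α p q δ)
    {α α' β β' : σ} {γ γ' δ δ' : τ} (hα : α ∈ S) (hα' : α' ∈ S) (hβ : β ∈ S) (hβ' : β' ∈ S)
    (hγ : γ ∈ T) (hγ' : γ' ∈ T) (hδ : δ ∈ T) (hδ' : δ' ∈ T)
    (hαα' : α < α') (hα'β : α' < β) (hββ' : β < β') (hγγ' : γ < γ') (hγ'δ : γ' < δ)
    (hδδ' : δ < δ') :
    F α α' γ γ' * F β β' δ δ' = F β β' γ γ' * F α α' δ δ' := by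
  have hskip : ∀ y ∈ T, ∀ r ∈ T, ∀ z ∈ T, y < r → r < z →
      F α α' y r * F β β' r z = F β β' y r * F α α' r z := fun y hy r hr z hz hyr hrz =>
    mul_eq_mul_trans (hF α' hα' β hβ y hy r hr hα'β hyr) (hF α' hα' β hβ r hr z hz hα'β hrz)
      (hadj α hα α' hα' β hβ y hy r hr z hz hαα' hα'β hyr hrz)
      (hadj α' hα' β hβ β' hβ' y hy r hr z hz hα'β hββ' hyr hrz)
  have hleft := hskip γ hγ γ' hγ' δ hδ hγγ' hγ'δ
  have hright := hskip γ' hγ' δ hδ δ' hδ' hγ'δ hδδ'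
  have hflip := mul_eq_mul_trans (hF α hα α' hα' γ' hγ' δ hδ hαα' hγ'δ)
    (hF β hβ β' hβ' γ' hγ' δ hδ hββ' hγ'δ)
    (hleft.trans (mul_comm _ _)) (hright.trans (mul_comm _ _))
  rw [hflip, mul_comm]

lemma TabachnikovCondition.boxVol_mul_boxVol {h : (Fin m → ℝ) → ℝ} {U : Set (Fin m → ℝ)}
    (hT : TabachnikovCondition h U) {i j : Fin m} (hij : i ≠ j) {a b : Fin m → ℝ}
    {α p β γ q δ : ℝ}
    (hbox : Icc (update (update a j γ) i α) (update (update b j δ) i β) ⊆ U)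
    (hp : p ∈ Icc α β) (hq : q ∈ Icc γ δ) :
    boxVol h i j a b α p γ q * boxVol h i j a b p β q δ =
      boxVol h i j a b p β γ q * boxVol h i j a b α p q δ := by
  have hsplit := hT _ _ hbox i j hij p (by simpa using hp) q
    (by simpa [update_of_ne hij.symm] using hq)
  simp only [subboxVol_eq_boxVol, boxVol_update_update h hij, Bool.false_eq_true, if_true,
    if_false, update_self, update_of_ne hij.symm] at hsplit
  linarith

lemma TabachnikovCondition.boxVol_mul_boxVol_of_lt {I : Fin m → Set ℝ}
    (hI : ∀ k, OrdConnected (I k)) {h : (Fin m → ℝ) → ℝ}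
    (hT : TabachnikovCondition h (univ.pi I)) (hcont : ContinuousOn h (univ.pi I))
    (hpos : ∀ x ∈ univ.pi I, 0 < h x) {i j : Fin m} (hij : i ≠ j) {a b : Fin m → ℝ}
    (ha : a ∈ univ.pi I) (hb : b ∈ univ.pi I) (hab : ∀ k, a k < b k) {α α' β β' γ γ' δ δ' : ℝ}
    (hα : α ∈ I i) (hα' : α' ∈ I i) (hβ : β ∈ I i) (hβ' : β' ∈ I i)
    (hγ : γ ∈ I j) (hγ' : γ' ∈ I j) (hδ : δ ∈ I j) (hδ' : δ' ∈ I j)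
    (hαα' : α < α') (hα'β : α' < β) (hββ' : β < β') (hγγ' : γ < γ') (hγ'δ : γ' < δ)
    (hδδ' : δ < δ') :
    boxVol h i j a b α α' γ γ' * boxVol h i j a b β β' δ δ' =
      boxVol h i j a b β β' γ γ' * boxVol h i j a b α α' δ δ' := by
  have hsub : ∀ u ∈ I i, ∀ v ∈ I i, ∀ y ∈ I j, ∀ z ∈ I j,
      Icc (update (update a j y) i u) (update (update b j z) i v) ⊆ univ.pi I :=
    fun u hu v hv y hy z hz => (ordConnected_pi fun k _ => hI k).out
      (update_update_mem_univ_pi ha hu hy) (update_update_mem_univ_pi hb hv hz)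
  refine mul_eq_mul_of_adjacent (S := I i) (T := I j) (F := boxVol h i j a b)
    (fun u hu v hv y hy z hz huv hyz => ?_)
    (fun u hu w _ v hv y hy r _ z hz huw hwv hyr hrz => hT.boxVol_mul_boxVol hij
      (hsub u hu v hv y hy z hz) ⟨huw.le, hwv.le⟩ ⟨hyr.le, hrz.le⟩)
    hα hα' hβ hβ' hγ hγ' hδ hδ' hαα' hα'β hββ' hγγ' hγ'δ hδδ'
  have hbox := hsub u hu v hv y hy z hz
  refine (setIntegral_Icc_pos (fun k => ?_) (hcont.mono hbox) fun x hx => hpos x (hbox hx)).ne'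
  simp only [update_apply]
  split_ifs
  exacts [huv, hyz, hab k]

lemma TabachnikovCondition.mul_eq_mul {I : Fin m → Set ℝ} (hI : ∀ k, IsOpen (I k))
    (hIord : ∀ k, OrdConnected (I k)) {h : (Fin m → ℝ) → ℝ}
    (hT : TabachnikovCondition h (univ.pi I)) (hcont : ContinuousOn h (univ.pi I))
    (hpos : ∀ x ∈ univ.pi I, 0 < h x) {i j : Fin m} (hij : i ≠ j) {x : Fin m → ℝ}
    (hx : x ∈ univ.pi I) {s t : ℝ} (hs : s ∈ I i) (ht : t ∈ I j) (hxs : x i < s) (hxt : x j < t) :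
    h x * h (update (update x j t) i s) = h (update x i s) * h (update x j t) := by
  have hU : IsOpen (univ.pi I) := isOpen_set_pi finite_univ fun k _ => hI k
  have hxi := hx i trivial
  have hxj := hx j trivial
  have hlim : ∀ α ∈ I i, ∀ γ ∈ I j, Tendsto (fun ε : ℝ =>
      (ε ^ Fintype.card (Fin m))⁻¹ * boxVol h i j x (x + ε • 1) α (α + ε) γ (γ + ε))
      (𝓝[>] 0) (𝓝 (h (update (update x j γ) i α))) := fun α hα γ hγ => by
    have hy := update_update_mem_univ_pi hx hα hγ
    simpa only [boxVol_add_smul_one] using tendsto_integral_cube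
      (hcont.continuousAt (hU.mem_nhds hy)) (hcont.stronglyMeasurableAtFilter hU _ hy)
  have hcubes : ∀ᶠ ε in 𝓝[>] (0 : ℝ),
      boxVol h i j x (x + ε • 1) (x i) (x i + ε) (x j) (x j + ε) *
        boxVol h i j x (x + ε • 1) s (s + ε) t (t + ε) =
      boxVol h i j x (x + ε • 1) s (s + ε) (x j) (x j + ε) *
        boxVol h i j x (x + ε • 1) (x i) (x i + ε) t (t + ε) := by
    filter_upwards [self_mem_nhdsWithin, eventually_add_smul_mem hU hx 1,
      eventually_add_smul_mem (hI i) hs 1, eventually_add_smul_mem (hI j) ht 1,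
      nhdsWithin_le_nhds (Iio_mem_nhds (sub_pos.2 hxs)),
      nhdsWithin_le_nhds (Iio_mem_nhds (sub_pos.2 hxt))] with ε (hε : 0 < ε) hxε hsε htε hεs hεt
    rw [smul_eq_mul, mul_one] at hsε htε
    have hadd : ∀ k, x k + ε ∈ I k := fun k => by simpa using hxε k trivial
    exact hT.boxVol_mul_boxVol_of_lt hIord hcont hpos hij hx hxε (fun k => by simpa using hε)
      hxi (hadd i) hs hsε hxj (hadd j) ht htε (lt_add_of_pos_right _ hε) (lt_sub_iff_add_lt'.1 hεs)
      (lt_add_of_pos_right _ hε) (lt_add_of_pos_right _ hε) (lt_sub_iff_add_lt'.1 hεt)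
      (lt_add_of_pos_right _ hε)
  have hleft := (hlim _ hxi _ hxj).mul (hlim s hs t ht)
  have hright := (hlim s hs _ hxj).mul (hlim _ hxi t ht)
  simp only [update_eq_self, update_update_apply_self hij] at hleft hright
  refine tendsto_nhds_unique hleft (hright.congr' ?_)
  filter_upwards [hcubes] with ε hε
  rw [mul_mul_mul_comm, ← hε, mul_mul_mul_comm]

lemma TabachnikovCondition.logpd2_eq_zero {I : Fin m → Set ℝ} (hI : ∀ k, IsOpen (I k))
    (hIord : ∀ k, OrdConnected (I k)) {h : (Fin m → ℝ) → ℝ}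
    (hT : TabachnikovCondition h (univ.pi I)) (hsm : ContDiffOn ℝ 2 h (univ.pi I))
    (hpos : ∀ x ∈ univ.pi I, 0 < h x) {i j : Fin m} (hij : i ≠ j) {x : Fin m → ℝ}
    (hx : x ∈ univ.pi I) : logpd2 h i j x = 0 := by
  have hU : IsOpen (univ.pi I) := isOpen_set_pi finite_univ fun k _ => hI k
  refine fderiv_fderiv_apply_eq_zero_of_eventually_sub_eq hU
    (hsm.log fun y hy => (hpos y hy).ne') hx ?_
  filter_upwards [self_mem_nhdsWithin, eventually_add_smul_mem (hI j) (hx j trivial) 1]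
    with t (ht : 0 < t) htI
  filter_upwards [self_mem_nhdsWithin, eventually_add_smul_mem (hI i) (hx i trivial) 1]
    with s (hs : 0 < s) hsI
  rw [smul_eq_mul, mul_one] at htI hsI
  have hfour := hT.mul_eq_mul hI hIord hsm.continuousOn hpos hij hx hsI htI
    (lt_add_of_pos_right _ hs) (lt_add_of_pos_right _ ht)
  have hne : ∀ α ∈ I i, ∀ γ ∈ I j, h (update (update x j γ) i α) ≠ 0 := fun α hα γ hγ =>
    (hpos _ (update_update_mem_univ_pi hx hα hγ)).ne'
  simp only [add_smul_single_one, update_of_ne hij]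
  have hlog := congrArg Real.log hfour
  rw [Real.log_mul (hpos x hx).ne' (hne _ hsI _ htI),
    Real.log_mul (by simpa using hne _ hsI _ (hx j trivial))
      (by simpa [update_update_apply_self hij] using hne _ (hx i trivial) _ htI)] at hlog
  linarith

end Tabachnikov

end

theorem stmt17_general {m : ℕ} (I : Fin m → Set ℝ) (hIopen : ∀ k, IsOpen (I k))
    (hIconn : ∀ k, IsPreconnected (I k)) (h : (Fin m → ℝ) → ℝ)
    (hsm : ContDiffOn ℝ 2 h (Set.univ.pi I)) (hpos : ∀ x ∈ Set.univ.pi I, 0 < h x) :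
    (∀ i j : Fin m, i ≠ j → ∀ x ∈ Set.univ.pi I, logpd2 h i j x = 0) ↔
      TabachnikovCondition h (Set.univ.pi I) := by
  have hord : ∀ k, (I k).OrdConnected := fun k => (hIconn k).ordConnected
  constructor
  · intro hmixed
    have hlog := hsm.log fun x hx => (hpos x hx).ne'
    exact (isProductDensityOn_of_logpd2_eq_zero hIopen (fun k => (hord k).convex) hlog hpos
      hmixed).tabachnikovCondition
  · exact fun hT i j hij x hx => hT.logpd2_eq_zero hIopen hord hsm hpos hij hx

/-- On an open box `U`, the nonuniformity tensor of the codimension-1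
web with density `h` vanishes iff Tabachnikov's condition `ac = bd` holds for every
closed box `K ⊆ U` subdivided by two leaves `{x_i = p}`, `{x_j = q}` into four
subregions of `h`-volumes `a = V_{−+}, b = V_{++}, c = V_{+−}, d = V_{−−}`. -/
theorem stmt17 {m : ℕ} (hm : 2 ≤ m)
    (I : Fin m → Set ℝ) (hIopen : ∀ k, IsOpen (I k)) (hIconn : ∀ k, IsPreconnected (I k))
    (h : (Fin m → ℝ) → ℝ)
    (hsm : ContDiffOn ℝ (⊤ : ℕ∞) h (Set.univ.pi I)) (hpos : ∀ x ∈ Set.univ.pi I, 0 < h x) :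
    (∀ i j : Fin m, i ≠ j → ∀ x ∈ Set.univ.pi I, logpd2 h i j x = 0) ↔
    (∀ a b : Fin m → ℝ, Set.Icc a b ⊆ Set.univ.pi I →
      ∀ i j : Fin m, i ≠ j →
      ∀ p ∈ Set.Icc (a i) (b i), ∀ q ∈ Set.Icc (a j) (b j),
        subboxVol h i j a b p q false true * subboxVol h i j a b p q true false =
          subboxVol h i j a b p q true true * subboxVol h i j a b p q false false) :=
  stmt17_general I hIopen hIconn h (hsm.of_le (WithTop.coe_le_coe.2 le_top)) hpos
end
end

section
/- Let m ≥ 2, let U ⊆ ℝ^m be an open box (a product of open intervals), and let h : U → ℝ be smooth and positive. Then the following are equivalent: (a) ∂²(log h)/∂x_i∂x_j ≡ 0 on U for all pairs i ≠ j; (b) for every closed box K = ∏_{k=1}^m [a_k,b_k] ⊆ U, every pair of distinct indices i ≠ j, and every p_i ∈ [a_i,b_i], p_j ∈ [a_j,b_j], the four quantities V_{st} (s,t ∈ {+,−}), defined as the integrals of h over ∏_k I_k with I_i = [p_i,b_i] if s = + and [a_i,p_i] if s = −, I_j = [p_j,b_j] if t = + and [a_j,p_j] if t = −, and I_k = [a_k,b_k]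 for k ∉ {i,j}, satisfy the implication: if V_{++} + V_{−+} = V_{+−} + V_{−−} and V_{++} = V_{−+}, then V_{++} = V_{−+} = V_{+−} = V_{−−}. -/
/-! Two copies of the measure with density `h` form a measure on pairs of points, and exchanging the
`i`-th coordinates of the two points carries the product of the quadrants of signs `(+, +)` and
`(-, -)` to the product of those of signs `(-, +)` and `(+, -)`. Hence
`2 * (V₊₊ * V₋₋ - V₋₊ * V₊₋)` is the integral over pairs of the alternating sum of `h u * h v` over
the exchanges of the coordinates `i` and `j`.

If the mixed derivatives of `log h` vanish, then `log h` separates off its `i`-th variable on every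
box, so that `h u * h v` is invariant under the exchange and `V₊₊ * V₋₋ = V₋₊ * V₊₋`, from which the
cutting condition follows by algebra. If `∂_i ∂_j log h ≠ 0` at a point, then a mean value theorem
on rectangles gives the alternating sum a constant sign on a small box around it, so that
`V₊₊ * V₋₋ ≠ V₋₊ * V₊₋` for all cuts into four parts of nonzero volume. Halving that box by
`{x_j = q}` and then its upper part by `{x_i = p}` contradicts the cutting condition.
-/

open MeasureTheory

noncomputable section

open Function Set

section PartialDeriv

variable {ι : Type*} [DecidableEq ι] {f : (ι → ℝ) → ℝ} {x : ι → ℝ}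

/-- The partial derivative `∂f/∂x_i`, with the junk value `0` where `f` is not differentiable. -/
def partialDeriv (i : ι) (f : (ι → ℝ) → ℝ) (x : ι → ℝ) : ℝ :=
  fderiv ℝ f x (Pi.single i 1)

theorem hasDerivAt_comp_update [Finite ι] {i : ι} {s : ℝ}
    (hf : DifferentiableAt ℝ f (update x i s)) :
    HasDerivAt (fun s => f (update x i s)) (partialDeriv i f (update x i s)) s := by
  cases nonempty_fintype ι
  exact hf.hasFDerivAt.comp_hasDerivAt s (hasDerivAt_update x i s)

theorem hasDerivAt_comp_update_update [Finite ι] {i j : ι} (hij : i ≠ j) {s t : ℝ}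
    (hf : DifferentiableAt ℝ f (update (update x i s) j t)) :
    HasDerivAt (fun s => f (update (update x i s) j t))
      (partialDeriv i f (update (update x i s) j t)) s := by
  simp only [update_comm hij] at hf ⊢
  exact hasDerivAt_comp_update hf

theorem partialDeriv_log [Finite ι] (hf : DifferentiableAt ℝ f x) (hx : f x ≠ 0) (i : ι) :
    partialDeriv i (fun y => Real.log (f y)) x = partialDeriv i f x / f x := by
  cases nonempty_fintype ι
  simp only [partialDeriv, (hf.hasFDerivAt.log hx).fderiv, _root_.smul_apply,
    smul_eq_mul, inv_mul_eq_div]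

variable [Fintype ι]

theorem contDiffAt_partialDeriv {n k : WithTop ℕ∞} (hf : ContDiffAt ℝ n f x) (hk : k + 1 ≤ n)
    (i : ι) : ContDiffAt ℝ k (partialDeriv i f) x :=
  (hf.fderiv_right hk).clm_apply contDiffAt_const

theorem fderiv_apply_eq_sum_partialDeriv (f : (ι → ℝ) → ℝ) (x v : ι → ℝ) :
    fderiv ℝ f x v = ∑ k, v k * partialDeriv k f x := by
  have hv : v = ∑ k, v k • Pi.single k (1 : ℝ) := by
    simp only [← Pi.single_smul', smul_eq_mul, mul_one, Finset.univ_sum_single]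
  conv_lhs => rw [hv, map_sum]
  simp only [map_smul, smul_eq_mul, partialDeriv]

theorem partialDeriv_partialDeriv_log (hf : ContDiffAt ℝ 2 f x) (hx : f x ≠ 0) (i j : ι) :
    partialDeriv j (partialDeriv i fun y => Real.log (f y)) x =
      (f x * partialDeriv j (partialDeriv i f) x - partialDeriv i f x * partialDeriv j f x) /
        f x ^ 2 := by
  have hlog : ContDiffAt ℝ 2 (fun y => Real.log (f y)) x := hf.log hx
  have hmul : partialDeriv i f =ᶠ[nhds x]
      fun y => f y * partialDeriv i (fun y => Real.log (f y)) y := by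
    filter_upwards [hf.eventually (by simp), hf.continuousAt.eventually_ne hx] with y hy hy0
    rw [partialDeriv_log (hy.differentiableAt two_ne_zero) hy0, mul_div_cancel₀ _ hy0]
  have hij : partialDeriv j (partialDeriv i f) x =
      f x * partialDeriv j (partialDeriv i fun y => Real.log (f y)) x +
        partialDeriv i (fun y => Real.log (f y)) x * partialDeriv j f x := by
    have hi := contDiffAt_partialDeriv hlog one_add_one_eq_two.le i
    rw [partialDeriv, hmul.fderiv_eq, fderiv_fun_mul (hf.differentiableAt two_ne_zero)
      (hi.differentiableAt one_ne_zero)]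
    rfl
  rw [hij, partialDeriv_log (hf.differentiableAt two_ne_zero) hx]
  field_simp
  ring

end PartialDeriv

section MeanValue

theorem eq_of_fderiv_sub_eq_zero {E : Type*} [NormedAddCommGroup E] [NormedSpace ℝ E]
    {f : E → ℝ} {s : Set E} (hs : Convex ℝ s) (hf : ∀ z ∈ s, DifferentiableAt ℝ f z) {x y : E}
    (hx : x ∈ s) (hy : y ∈ s) (h0 : ∀ z ∈ s, fderiv ℝ f z (y - x) = 0) : f y = f x := by
  obtain ⟨z, hz, hfz⟩ :=
    domain_mvt (fun z hz => (hf z hz).hasFDerivAt.hasFDerivWithinAt) hs hx hy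
  exact sub_eq_zero.mp (hfz.trans (h0 z (hs.segment_subset hx hy hz)))

theorem exists_mixedDeriv_eq_rectangle {F F₁ F₁₂ : ℝ → ℝ → ℝ} {a b c d : ℝ} (hab : a < b)
    (hcd : c < d) (h₁ : ∀ s ∈ Icc a b, ∀ t ∈ Icc c d, HasDerivAt (fun s => F s t) (F₁ s t) s)
    (h₁₂ : ∀ s ∈ Icc a b, ∀ t ∈ Icc c d, HasDerivAt (F₁ s) (F₁₂ s t) t) :
    ∃ ξ ∈ Icc a b, ∃ η ∈ Icc c d,
      F b d - F b c - (F a d - F a c) = F₁₂ ξ η * ((b - a) * (d - c)) := by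
  have hd : d ∈ Icc c d := right_mem_Icc.2 hcd.le
  have hc : c ∈ Icc c d := left_mem_Icc.2 hcd.le
  have hdiff : ∀ s ∈ Icc a b,
      HasDerivAt (fun s => F s d - F s c) (F₁ s d - F₁ s c) s :=
    fun s hs => (h₁ s hs d hd).sub (h₁ s hs c hc)
  obtain ⟨ξ, hξ, hFξ⟩ := exists_hasDerivAt_eq_slope _ _ hab
    (fun s hs => (hdiff s hs).continuousAt.continuousWithinAt)
    (fun s hs => hdiff s (Ioo_subset_Icc_self hs))
  have hξ' := Ioo_subset_Icc_self hξ
  obtain ⟨η, hη, hFη⟩ := exists_hasDerivAt_eq_slope (F₁ ξ) (F₁₂ ξ) hcd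
    (fun t ht => (h₁₂ ξ hξ' t ht).continuousAt.continuousWithinAt)
    (fun t ht => h₁₂ ξ hξ' t (Ioo_subset_Icc_self ht))
  refine ⟨ξ, hξ', η, Ioo_subset_Icc_self hη, ?_⟩
  rw [eq_div_iff (sub_pos.2 hab).ne'] at hFξ
  rw [eq_div_iff (sub_pos.2 hcd).ne'] at hFη
  linear_combination -hFξ - (b - a) * hFη

theorem exists_mixedDeriv_eq_alternating_mul {P P₁ P₂ P₁₂ Q Q₁ Q₂ Q₁₂ : ℝ → ℝ → ℝ}
    {a b c d : ℝ} (hab : a < b) (hcd : c < d)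
    (hP₁ : ∀ s ∈ Icc a b, ∀ t ∈ Icc c d, HasDerivAt (fun s => P s t) (P₁ s t) s)
    (hP₂ : ∀ s ∈ Icc a b, ∀ t ∈ Icc c d, HasDerivAt (P s) (P₂ s t) t)
    (hP₁₂ : ∀ s ∈ Icc a b, ∀ t ∈ Icc c d, HasDerivAt (P₁ s) (P₁₂ s t) t)
    (hQ₁ : ∀ s ∈ Icc a b, ∀ t ∈ Icc c d, HasDerivAt (fun s => Q s t) (Q₁ s t) s)
    (hQ₂ : ∀ s ∈ Icc a b, ∀ t ∈ Icc c d, HasDerivAt (Q s) (Q₂ s t) t)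
    (hQ₁₂ : ∀ s ∈ Icc a b, ∀ t ∈ Icc c d, HasDerivAt (Q₁ s) (Q₁₂ s t) t) :
    ∃ ξ ∈ Icc a b, ∃ η ∈ Icc c d,
      P b d * Q a c - P a d * Q b c - P b c * Q a d + P a c * Q b d =
        (Q a c * P₁₂ ξ η - Q₁ ξ c * P₂ a η + (P a c * Q₁₂ ξ η - P₁ ξ c * Q₂ a η)) *
          ((b - a) * (d - c)) := by
  have ha : a ∈ Icc a b := left_mem_Icc.2 hab.le
  have hc : c ∈ Icc c d := left_mem_Icc.2 hcd.le
  -- The subtracted products make `Φ` vanish on the lines `s = a` and `t = c`.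
  let Φ (s t : ℝ) := Q a c * P s t + P a c * Q s t - Q s c * P a t - P s c * Q a t
  obtain ⟨ξ, hξ, η, hη, h⟩ := exists_mixedDeriv_eq_rectangle (F := Φ) hab hcd
    (fun s hs t ht =>
      ((((hP₁ s hs t ht).const_mul (Q a c)).add ((hQ₁ s hs t ht).const_mul (P a c))).sub
        ((hQ₁ s hs c hc).mul_const (P a t))).sub ((hP₁ s hs c hc).mul_const (Q a t)))
    (fun s hs t ht =>
      ((((hP₁₂ s hs t ht).const_mul (Q a c)).add ((hQ₁₂ s hs t ht).const_mul (P a c))).sub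
        ((hP₂ a ha t ht).const_mul (Q₁ s c))).sub ((hQ₂ a ha t ht).const_mul (P₁ s c)))
  refine ⟨ξ, hξ, η, hη, ?_⟩
  linear_combination h

end MeanValue

section Exchange

variable {ι α : Type*} [DecidableEq ι] [MeasurableSpace α]

/-- The exchange of the `i`-th coordinates of the two points of a pair. -/
def exchange (i : ι) : (ι → α) × (ι → α) ≃ᵐ (ι → α) × (ι → α) :=
  MeasurableEquiv.ofInvolutive (fun z => (update z.1 i (z.2 i), update z.2 i (z.1 i)))
    (fun z => by simp) (by fun_prop)

theorem exchange_apply (i : ι) (z : (ι → α) × (ι → α)) :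
    exchange i z = (update z.1 i (z.2 i), update z.2 i (z.1 i)) :=
  rfl

theorem measurePreserving_exchange [Fintype ι] (μ : ι → Measure α) [∀ k, SigmaFinite (μ k)]
    (i : ι) : MeasurePreserving (exchange (α := α) i) ((Measure.pi μ).prod (Measure.pi μ))
      ((Measure.pi μ).prod (Measure.pi μ)) := by
  have e := measurePreserving_arrowProdEquivProdArrow α α ι μ μ
  have hswap : MeasurePreserving
      (fun (w : ι → α × α) k => (if k = i then Prod.swap else id : α × α → α × α) (w k))
      (Measure.pi fun k => (μ k).prod (μ k)) (Measure.pi fun k => (μ k).prod (μ k)) := by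
    refine measurePreserving_pi (f := fun k => if k = i then Prod.swap else id) _ _ fun k => ?_
    split_ifs
    exacts [Measure.measurePreserving_swap, .id _]
  convert e.comp (hswap.comp (e.symm _)) using 1
  funext z
  refine Prod.ext ?_ ?_ <;> funext k <;> by_cases hk : k = i <;>
    simp [hk, exchange_apply, MeasurableEquiv.arrowProdEquivProdArrow,
      Equiv.arrowProdEquivProdArrow]

theorem exchange_exchange (i : ι) (z : (ι → α) × (ι → α)) : exchange i (exchange i z) = z :=
  (exchange i).left_inv z

theorem setIntegral_exchange [Fintype ι] {E : Type*} [NormedAddCommGroup E] [NormedSpace ℝ E]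
    (μ : ι → Measure α) [∀ k, SigmaFinite (μ k)] (i : ι) (F : (ι → α) × (ι → α) → E)
    (A : Set ((ι → α) × (ι → α))) :
    ∫ z in A, F z ∂(Measure.pi μ).prod (Measure.pi μ) =
      ∫ z in exchange i ⁻¹' A, F (exchange i z) ∂(Measure.pi μ).prod (Measure.pi μ) :=
  ((measurePreserving_exchange μ i).setIntegral_preimage_emb
    (exchange i).measurableEmbedding F A).symm

end Exchange

section Halving

variable {X : Type*} [MeasurableSpace X] {μ : Measure X} {φ g : X → ℝ}

theorem setIntegral_pos_of_ae_pos {s : Set X} (hg : IntegrableOn g s μ) (hs : μ s ≠ 0)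
    (hpos : ∀ᵐ x ∂μ.restrict s, 0 < g x) : 0 < ∫ x in s, g x ∂μ := by
  rw [integral_pos_iff_support_of_nonneg_ae (hpos.mono fun _ => le_of_lt) hg, pos_iff_ne_zero]
  have hsupp : support g =ᵐ[μ.restrict s] univ :=
    Filter.eventuallyEq_univ.2 (hpos.mono fun _ => ne_of_gt)
  rwa [measure_congr hsupp, Measure.restrict_apply_univ]

theorem integral_sublevel_add_superlevel (hφ : Measurable φ) (hg : Integrable g μ) {p : ℝ}
    (hp : μ {x | φ x = p} = 0) :
    ∫ x in {x | p ≤ φ x}, g x ∂μ + ∫ x in {x | φ x ≤ p}, g x ∂μ = ∫ x, g x ∂μ := by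
  have hdisj : AEDisjoint μ {x | p ≤ φ x} {x | φ x ≤ p} :=
    measure_mono_null (fun x hx => le_antisymm hx.2 hx.1) hp
  rw [← setIntegral_union₀ hdisj (measurableSet_le hφ measurable_const).nullMeasurableSet
    hg.integrableOn hg.integrableOn]
  exact (congrArg (∫ x in ·, g x ∂μ) (eq_univ_of_forall fun x => le_total p (φ x))).trans
    setIntegral_univ

theorem continuous_integral_sublevel (hφ : Measurable φ) (hnull : ∀ p, μ {x | φ x = p} = 0)
    (hg : Integrable g μ) : Continuous fun p => ∫ x in {x | φ x ≤ p}, g x ∂μ := by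
  have hmeas (p : ℝ) : MeasurableSet {x | φ x ≤ p} := measurableSet_le hφ measurable_const
  simp only [← integral_indicator (hmeas _)]
  refine continuous_iff_continuousAt.2 fun p₀ => continuousAt_of_dominated (bound := (‖g ·‖))
    (.of_forall fun p => hg.aestronglyMeasurable.indicator (hmeas p))
    (.of_forall fun p => .of_forall fun x => norm_indicator_le_norm_self _ _) hg.norm ?_
  filter_upwards [measure_eq_zero_iff_ae_notMem.1 (hnull p₀)] with x hx
  have hlocal : ∀ᶠ p in nhds p₀, φ x ≤ p ↔ φ x ≤ p₀ := by
    rcases lt_or_gt_of_ne hx with hlt | hgt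
    · filter_upwards [lt_mem_nhds hlt] with p hp using iff_of_true hp.le hlt.le
    · filter_upwards [gt_mem_nhds hgt] with p hp using iff_of_false hp.not_ge hgt.not_ge
  refine (continuousAt_const (y := indicator {x | φ x ≤ p₀} g x)).congr ?_
  filter_upwards [hlocal] with p hp
  simp only [indicator_apply, mem_ofPred_eq, hp]

theorem exists_integral_superlevel_eq_sublevel (hφ : Measurable φ)
    (hnull : ∀ p, μ {x | φ x = p} = 0) (hg : Integrable g μ) {a b : ℝ} (hab : a ≤ b)
    (hφab : ∀ᵐ x ∂μ, φ x ∈ Icc a b) :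
    ∃ p ∈ Icc a b, ∫ x in {x | p ≤ φ x}, g x ∂μ = ∫ x in {x | φ x ≤ p}, g x ∂μ := by
  have ha : ∫ x in {x | φ x ≤ a}, g x ∂μ = 0 := by
    refine setIntegral_measure_zero _ (measure_mono_null_ae ?_ (hnull a))
    filter_upwards [hφab] with x hx hxa using le_antisymm hxa hx.1
  have hb : ∫ x in {x | φ x ≤ b}, g x ∂μ = ∫ x, g x ∂μ := by
    rw [setIntegral_congr_set (Filter.eventuallyEq_univ.2 (hφab.mono fun x hx => hx.2)),
      setIntegral_univ]
  have hmid : (∫ x, g x ∂μ) / 2 ∈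
      uIcc (∫ x in {x | φ x ≤ a}, g x ∂μ) (∫ x in {x | φ x ≤ b}, g x ∂μ) := by
    rw [ha, hb, mem_uIcc]
    rcases le_total 0 (∫ x, g x ∂μ) with h0 | h0
    · left; constructor <;> linarith
    · right; constructor <;> linarith
  obtain ⟨p, hp, hpmid⟩ := intermediate_value_uIcc
    (continuous_integral_sublevel hφ hnull hg).continuousOn hmid
  rw [uIcc_of_le hab] at hp
  have hadd := integral_sublevel_add_superlevel hφ hg (hnull p)
  exact ⟨p, hp, by linarith⟩

end Halving

section Quadrant

variable {ι : Type*} {a b : ι → ℝ} {i j : ι} {p q : ℝ}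

/-- The closed ray with endpoint `p` of sign `s`: `[p, ∞)` for `true`, `(-∞, p]` for `false`. -/
def ray (p : ℝ) (s : Bool) : Set ℝ :=
  if s then Ici p else Iic p

theorem isClosed_ray (p : ℝ) (s : Bool) : IsClosed (ray p s) := by
  cases s
  exacts [isClosed_Iic, isClosed_Ici]

theorem measurableSet_coord_mem_ray (i : ι) (p : ℝ) (s : Bool) :
    MeasurableSet {x : ι → ℝ | x i ∈ ray p s} :=
  measurable_pi_apply i (isClosed_ray p s).measurableSet

theorem Icc_inter_ray {a b p : ℝ} (hp : p ∈ Icc a b) (s : Bool) :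
    Icc a b ∩ ray p s = Icc (if s then p else a) (if s then b else p) := by
  cases s
  · ext x
    exact ⟨fun hx => ⟨hx.1.1, hx.2⟩, fun hx => ⟨⟨hx.1, hx.2.trans hp.2⟩, hx.2⟩⟩
  · ext x
    exact ⟨fun hx => ⟨hx.2, hx.1.2⟩, fun hx => ⟨⟨hp.1.trans hx.1, hx.2⟩, hx.1⟩⟩

/-- The part of the box `[a, b]` cut out by the sides `s` of `{x_i = p}` and `t` of
`{x_j = q}`. -/
def quadrant (a b : ι → ℝ) (i j : ι) (p q : ℝ) (s t : Bool) : Set (ι → ℝ) :=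
  {x ∈ Icc a b | x i ∈ ray p s ∧ x j ∈ ray q t}

theorem quadrant_subset (s t : Bool) : quadrant a b i j p q s t ⊆ Icc a b :=
  sep_subset _ _

theorem quadrant_swap (s t : Bool) : quadrant a b i j p q s t = quadrant a b j i q p t s := by
  simp only [quadrant, and_comm (a := _ ∈ ray p s)]

theorem measurableSet_quadrant [Countable ι] (s t : Bool) :
    MeasurableSet (quadrant a b i j p q s t) :=
  measurableSet_Icc.inter <|
    (measurableSet_coord_mem_ray i p s).inter (measurableSet_coord_mem_ray j q t)

theorem quadrant_eq_Icc [DecidableEq ι] (hij : i ≠ j) (hp : p ∈ Icc (a i) (b i))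
    (hq : q ∈ Icc (a j) (b j)) (s t : Bool) :
    quadrant a b i j p q s t = Icc
      (fun k => if k = i then (if s then p else a i)
        else if k = j then (if t then q else a j) else a k)
      (fun k => if k = i then (if s then b i else p)
        else if k = j then (if t then b j else q) else b k) := by
  have hi := Icc_inter_ray hp s
  have hj := Icc_inter_ray hq t
  ext x
  simp only [quadrant, ← pi_univ_Icc, mem_ofPred_eq, mem_univ_pi]
  constructor
  · rintro ⟨hx, hxi, hxj⟩ k
    by_cases hki : k = i
    · subst hki
      simpa only [if_true] using hi.subset ⟨hx k, hxi⟩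
    by_cases hkj : k = j
    · subst hkj
      simpa only [hki, if_false, if_true] using hj.subset ⟨hx k, hxj⟩
    simpa only [hki, hkj, if_false] using hx k
  · intro hx
    have hxi := hi.superset (by simpa only [if_true] using hx i)
    have hxj := hj.superset (by simpa only [hij.symm, if_true, if_false] using hx j)
    refine ⟨fun k => ?_, hxi.2, hxj.2⟩
    by_cases hki : k = i
    · exact hki ▸ hxi.1
    by_cases hkj : k = j
    · exact hkj ▸ hxj.1
    simpa only [hki, hkj, if_false] using hx k

variable [DecidableEq ι]

theorem update_mem_Icc {x : ι → ℝ} (hx : x ∈ Icc a b) (k : ι) {r : ℝ}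
    (hr : r ∈ Icc (a k) (b k)) : update x k r ∈ Icc a b :=
  ⟨le_update_iff.2 ⟨hr.1, fun l _ => hx.1 l⟩, update_le_iff.2 ⟨hr.2, fun l _ => hx.2 l⟩⟩

theorem update_mem_quadrant (hij : i ≠ j) {s t s' t' : Bool} {x y : ι → ℝ}
    (hx : x ∈ quadrant a b i j p q s t) (hy : y ∈ quadrant a b i j p q s' t') :
    update x i (y i) ∈ quadrant a b i j p q s' t :=
  ⟨update_mem_Icc hx.1 i ⟨hy.1.1 i, hy.1.2 i⟩, by simpa using hy.2.1,
    by simpa [hij.symm] using hx.2.2⟩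

theorem exchange_fst_preimage_quadrant_prod (hij : i ≠ j) (s t s' t' : Bool) :
    exchange i ⁻¹' (quadrant a b i j p q s t ×ˢ quadrant a b i j p q s' t') =
      quadrant a b i j p q s' t ×ˢ quadrant a b i j p q s t' := by
  have hmaps (s t s' t' : Bool) : MapsTo (exchange i)
      (quadrant a b i j p q s t ×ˢ quadrant a b i j p q s' t')
      (quadrant a b i j p q s' t ×ˢ quadrant a b i j p q s t') := fun z hz =>
    ⟨update_mem_quadrant hij hz.1 hz.2, update_mem_quadrant hij hz.2 hz.1⟩
  refine Subset.antisymm (fun z hz => ?_) (hmaps s' t s t')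
  simpa only [exchange_exchange] using hmaps s t s' t' hz

theorem exchange_snd_preimage_quadrant_prod (hij : i ≠ j) (s t s' t' : Bool) :
    exchange j ⁻¹' (quadrant a b i j p q s t ×ˢ quadrant a b i j p q s' t') =
      quadrant a b i j p q s t' ×ˢ quadrant a b i j p q s' t := by
  simp only [quadrant_swap (i := i), exchange_fst_preimage_quadrant_prod hij.symm]

theorem exchange_preimage_Icc_prod (k : ι) :
    exchange k ⁻¹' (Icc a b ×ˢ Icc a b) = Icc a b ×ˢ Icc a b := by
  have hmaps : MapsTo (exchange k) (Icc a b ×ˢ Icc a b) (Icc a b ×ˢ Icc a b) := fun z hz =>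
    ⟨update_mem_Icc hz.1 k ⟨hz.2.1 k, hz.2.2 k⟩, update_mem_Icc hz.2 k ⟨hz.1.1 k, hz.1.2 k⟩⟩
  refine Subset.antisymm (fun z hz => ?_) hmaps
  simpa only [exchange_exchange] using hmaps hz

end Quadrant

section QuadrantIntegral

variable {ι : Type*} [Fintype ι] {h : (ι → ℝ) → ℝ} {a b : ι → ℝ} {i j : ι} {p q : ℝ}

/-- The `h`-volume of `quadrant a b i j p q s t`. -/
def quadrantVol (h : (ι → ℝ) → ℝ) (a b : ι → ℝ) (i j : ι) (p q : ℝ) (s t : Bool) : ℝ :=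
  ∫ x in quadrant a b i j p q s t, h x

theorem subboxVol_eq_quadrantVol {m : ℕ} {a b : Fin m → ℝ} {i j : Fin m} (hij : i ≠ j)
    (hp : p ∈ Icc (a i) (b i)) (hq : q ∈ Icc (a j) (b j)) (h : (Fin m → ℝ) → ℝ) (s t : Bool) :
    subboxVol h i j a b p q s t = quadrantVol h a b i j p q s t := by
  rw [subboxVol, quadrantVol, quadrant_eq_Icc hij hp hq]

theorem volume_restrict_hyperplane (A : Set (ι → ℝ)) (i : ι) (p : ℝ) :
    volume.restrict A {x | x i = p} = 0 :=
  Measure.restrict_le_self.absolutelyContinuous 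
    (Measure.pi_hyperplane (fun _ : ι => (volume : Measure ℝ)) i p)

theorem setIntegral_sep_ray (h : (ι → ℝ) → ℝ) (A : Set (ι → ℝ)) (i : ι) (p : ℝ) (s : Bool) :
    ∫ x in {x ∈ A | x i ∈ ray p s}, h x =
      ∫ x in {x | x i ∈ ray p s}, h x ∂volume.restrict A := by
  rw [Measure.restrict_restrict (measurableSet_coord_mem_ray i p s), inter_comm]
  rfl

theorem quadrantVol_eq_setIntegral_restrict (h : (ι → ℝ) → ℝ) (s t : Bool) :
    quadrantVol h a b i j p q s t =
      ∫ x in {x | x i ∈ ray p s}, h x ∂volume.restrict {x ∈ Icc a b | x j ∈ ray q t} := by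
  rw [← setIntegral_sep_ray, quadrantVol]
  congr 2
  ext x
  exact (and_assoc.trans (and_congr_right' and_comm)).symm

theorem quadrantVol_add (hh : IntegrableOn h (Icc a b)) (t : Bool) :
    quadrantVol h a b i j p q true t + quadrantVol h a b i j p q false t =
      ∫ x in {x ∈ Icc a b | x j ∈ ray q t}, h x := by
  simp only [quadrantVol_eq_setIntegral_restrict]
  exact integral_sublevel_add_superlevel (measurable_pi_apply i)
    (hh.mono_set (sep_subset _ _)) (volume_restrict_hyperplane _ i p)

theorem sum_quadrantVol (hh : IntegrableOn h (Icc a b)) :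
    quadrantVol h a b i j p q true true + quadrantVol h a b i j p q false true +
        (quadrantVol h a b i j p q true false + quadrantVol h a b i j p q false false) =
      ∫ x in Icc a b, h x := by
  rw [quadrantVol_add hh, quadrantVol_add hh, setIntegral_sep_ray, setIntegral_sep_ray]
  exact integral_sublevel_add_superlevel (measurable_pi_apply j) hh
    (volume_restrict_hyperplane _ j q)

theorem exists_quadrantVol_balanced (hab : a ≤ b) (hh : IntegrableOn h (Icc a b)) (i j : ι) :
    ∃ p ∈ Icc (a i) (b i), ∃ q ∈ Icc (a j) (b j),
      quadrantVol h a b i j p q true true + quadrantVol h a b i j p q false true =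
        quadrantVol h a b i j p q true false + quadrantVol h a b i j p q false false ∧
      quadrantVol h a b i j p q true true = quadrantVol h a b i j p q false true := by
  have hmem (A : Set (ι → ℝ)) (hA : A ⊆ Icc a b) (hAm : MeasurableSet A) (k : ι) :
      ∀ᵐ x ∂volume.restrict A, x k ∈ Icc (a k) (b k) :=
    (ae_restrict_mem hAm).mono fun x hx => ⟨(hA hx).1 k, (hA hx).2 k⟩
  obtain ⟨q, hq, hqj⟩ := exists_integral_superlevel_eq_sublevel (measurable_pi_apply j)
    (volume_restrict_hyperplane _ j) hh (hab j) (hmem _ subset_rfl measurableSet_Icc j)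
  have hAm : MeasurableSet {x ∈ Icc a b | x j ∈ ray q true} :=
    measurableSet_Icc.inter (measurableSet_coord_mem_ray j q true)
  obtain ⟨p, hp, hpi⟩ := exists_integral_superlevel_eq_sublevel (measurable_pi_apply i)
    (volume_restrict_hyperplane _ i) (hh.mono_set (sep_subset _ _)) (hab i)
    (hmem _ (sep_subset _ (· j ∈ ray q true)) hAm i)
  refine ⟨p, hp, q, hq, ?_, ?_⟩
  · rw [quadrantVol_add hh, quadrantVol_add hh]
    rw [setIntegral_sep_ray, setIntegral_sep_ray]
    exact hqj
  · rw [quadrantVol_eq_setIntegral_restrict, quadrantVol_eq_setIntegral_restrict]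
    exact hpi

/-- The function `(u, v) ↦ h u * h v`: the density of the product of two copies of the measure
with density `h`. -/
def pairDensity (h : (ι → ℝ) → ℝ) (z : (ι → ℝ) × (ι → ℝ)) : ℝ :=
  h z.1 * h z.2

theorem integrableOn_pairDensity (hh : IntegrableOn h (Icc a b)) :
    IntegrableOn (pairDensity h) (Icc a b ×ˢ Icc a b) := by
  rw [IntegrableOn, Measure.volume_eq_prod, ← Measure.prod_restrict]
  exact Integrable.mul_prod hh hh

theorem quadrantVol_mul (s t s' t' : Bool) :
    quadrantVol h a b i j p q s t * quadrantVol h a b i j p q s' t' =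
      ∫ z in quadrant a b i j p q s t ×ˢ quadrant a b i j p q s' t', pairDensity h z :=
  (setIntegral_prod_mul h h _ _).symm

variable [DecidableEq ι]

theorem quadrantVol_mul_eq_exchange_fst (hij : i ≠ j) (s t s' t' : Bool) :
    quadrantVol h a b i j p q s' t * quadrantVol h a b i j p q s t' =
      ∫ z in quadrant a b i j p q s t ×ˢ quadrant a b i j p q s' t',
        pairDensity h (exchange i z) := by
  rw [quadrantVol_mul, Measure.volume_eq_prod, volume_pi, setIntegral_exchange _ i,
    exchange_fst_preimage_quadrant_prod hij]

theorem quadrantVol_mul_eq_exchange_snd (hij : i ≠ j) (s t s' t' : Bool) :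
    quadrantVol h a b i j p q s t' * quadrantVol h a b i j p q s' t =
      ∫ z in quadrant a b i j p q s t ×ˢ quadrant a b i j p q s' t',
        pairDensity h (exchange j z) := by
  rw [quadrantVol_mul, Measure.volume_eq_prod, volume_pi, setIntegral_exchange _ j,
    exchange_snd_preimage_quadrant_prod hij]

theorem quadrantVol_mul_eq_exchange_both (hij : i ≠ j) (s t s' t' : Bool) :
    quadrantVol h a b i j p q s' t' * quadrantVol h a b i j p q s t =
      ∫ z in quadrant a b i j p q s t ×ˢ quadrant a b i j p q s' t',
        pairDensity h (exchange j (exchange i z)) := by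
  rw [quadrantVol_mul_eq_exchange_snd hij, Measure.volume_eq_prod, volume_pi,
    setIntegral_exchange _ i, exchange_fst_preimage_quadrant_prod hij]

theorem integrableOn_comp_exchange {F : (ι → ℝ) × (ι → ℝ) → ℝ}
    (hF : IntegrableOn F (Icc a b ×ˢ Icc a b)) (k : ι) :
    IntegrableOn (fun z => F (exchange k z)) (Icc a b ×ˢ Icc a b) := by
  rw [← exchange_preimage_Icc_prod k]
  exact ((measurePreserving_exchange (fun _ => volume) k).integrableOn_comp_preimage
    (exchange k).measurableEmbedding).2 hF

/-- The alternating sum of `pairDensity h` over the exchanges of the coordinates `i` and `j`. -/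
def exchangeDefect (h : (ι → ℝ) → ℝ) (i j : ι) (z : (ι → ℝ) × (ι → ℝ)) : ℝ :=
  pairDensity h z - pairDensity h (exchange i z) - pairDensity h (exchange j z) +
    pairDensity h (exchange j (exchange i z))

theorem integrableOn_exchangeDefect (hh : IntegrableOn h (Icc a b)) (i j : ι) :
    IntegrableOn (exchangeDefect h i j) (Icc a b ×ˢ Icc a b) := by
  have hH := integrableOn_pairDensity hh
  exact ((hH.sub (integrableOn_comp_exchange hH i)).sub (integrableOn_comp_exchange hH j)).add
    (integrableOn_comp_exchange (integrableOn_comp_exchange hH j) i)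

theorem setIntegral_exchangeDefect (hij : i ≠ j) (hh : IntegrableOn h (Icc a b)) :
    ∫ z in quadrant a b i j p q true true ×ˢ quadrant a b i j p q false false,
        exchangeDefect h i j z =
      2 * (quadrantVol h a b i j p q true true * quadrantVol h a b i j p q false false -
        quadrantVol h a b i j p q false true * quadrantVol h a b i j p q true false) := by
  have hH := integrableOn_pairDensity hh
  have hQ := prod_mono (quadrant_subset (a := a) (b := b) (i := i) (j := j) (p := p) (q := q)
    true true) (quadrant_subset (a := a) (b := b) (i := i) (j := j) (p := p) (q := q) false false)
  have h₁ := hH.mono_set hQ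
  have h₂ := (integrableOn_comp_exchange hH i).mono_set hQ
  have h₃ := (integrableOn_comp_exchange hH j).mono_set hQ
  have h₄ := (integrableOn_comp_exchange (integrableOn_comp_exchange hH j) i).mono_set hQ
  simp only [exchangeDefect]
  rw [integral_add (by exact (h₁.sub h₂).sub h₃) h₄, integral_sub (by exact h₁.sub h₂) h₃,
    integral_sub h₁ h₂, ← quadrantVol_mul, ← quadrantVol_mul_eq_exchange_fst hij,
    ← quadrantVol_mul_eq_exchange_snd hij, ← quadrantVol_mul_eq_exchange_both hij]
  ring

end QuadrantIntegral

section Separation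

variable {ι : Type*} [Fintype ι] [DecidableEq ι] {g h : (ι → ℝ) → ℝ} {a b : ι → ℝ} {i j : ι}
  {p q : ℝ}

theorem partialDeriv_eq_of_mixed_eq_zero (hg : ∀ x ∈ Icc a b, ContDiffAt ℝ 2 g x)
    (h0 : ∀ k, i ≠ k → ∀ x ∈ Icc a b, partialDeriv k (partialDeriv i g) x = 0) {x y : ι → ℝ}
    (hx : x ∈ Icc a b) (hy : y ∈ Icc a b) (hxy : x i = y i) :
    partialDeriv i g y = partialDeriv i g x := by
  refine eq_of_fderiv_sub_eq_zero (convex_Icc a b) (fun z hz => ?_) hx hy fun z hz => ?_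
  · exact (contDiffAt_partialDeriv (hg z hz) one_add_one_eq_two.le i).differentiableAt one_ne_zero
  · rw [fderiv_apply_eq_sum_partialDeriv]
    refine Finset.sum_eq_zero fun k _ => ?_
    rcases eq_or_ne i k with rfl | hk
    · simp only [Pi.sub_apply, hxy, sub_self, zero_mul]
    · rw [h0 k hk z hz, mul_zero]

theorem update_add_update_of_mixed_eq_zero (hg : ∀ x ∈ Icc a b, ContDiffAt ℝ 2 g x)
    (h0 : ∀ k, i ≠ k → ∀ x ∈ Icc a b, partialDeriv k (partialDeriv i g) x = 0) {u v : ι → ℝ}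
    (hu : u ∈ Icc a b) (hv : v ∈ Icc a b) :
    g (update u i (v i)) + g (update v i (u i)) = g u + g v := by
  have hD : ∀ s ∈ Icc (a i) (b i),
      HasDerivAt (fun s => g (update u i s) - g (update v i s)) 0 s := fun s hs => by
    have hus := update_mem_Icc hu i hs
    have hvs := update_mem_Icc hv i hs
    have heq := partialDeriv_eq_of_mixed_eq_zero hg h0 hvs hus (by simp only [update_self])
    simpa only [heq, sub_self] using
      (hasDerivAt_comp_update ((hg _ hus).differentiableAt two_ne_zero)).fun_sub
        (hasDerivAt_comp_update ((hg _ hvs).differentiableAt two_ne_zero))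
  have hconst := eq_of_fderiv_sub_eq_zero (convex_Icc (a i) (b i))
    (fun s hs => (hD s hs).differentiableAt) ⟨hu.1 i, hu.2 i⟩ ⟨hv.1 i, hv.2 i⟩
    (fun s hs => by simp [(hD s hs).hasFDerivAt.fderiv])
  simp only [update_eq_self] at hconst
  linarith

theorem pairDensity_exchange_of_mixed_eq_zero (hh : ∀ x ∈ Icc a b, ContDiffAt ℝ 2 h x)
    (hpos : ∀ x ∈ Icc a b, 0 < h x)
    (h0 : ∀ k, i ≠ k → ∀ x ∈ Icc a b,
      partialDeriv k (partialDeriv i fun y => Real.log (h y)) x = 0)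
    {z : (ι → ℝ) × (ι → ℝ)} (hz : z ∈ Icc a b ×ˢ Icc a b) :
    pairDensity h (exchange i z) = pairDensity h z := by
  have hpos' (w) (hw : w ∈ Icc a b ×ˢ Icc a b) : 0 < pairDensity h w :=
    mul_pos (hpos _ hw.1) (hpos _ hw.2)
  have hez : exchange i z ∈ Icc a b ×ˢ Icc a b := (exchange_preimage_Icc_prod i).superset hz
  refine Real.log_injOn_pos (hpos' _ hez) (hpos' _ hz) ?_
  rw [pairDensity, pairDensity, Real.log_mul (hpos _ hez.1).ne' (hpos _ hez.2).ne',
    Real.log_mul (hpos _ hz.1).ne' (hpos _ hz.2).ne']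
  exact update_add_update_of_mixed_eq_zero (fun x hx => (hh x hx).log (hpos x hx).ne') h0 hz.1 hz.2

theorem quadrantVol_mul_eq_mul_of_mixed_eq_zero (hij : i ≠ j)
    (hh : ∀ x ∈ Icc a b, ContDiffAt ℝ 2 h x) (hpos : ∀ x ∈ Icc a b, 0 < h x)
    (h0 : ∀ k, i ≠ k → ∀ x ∈ Icc a b,
      partialDeriv k (partialDeriv i fun y => Real.log (h y)) x = 0) :
    quadrantVol h a b i j p q true true * quadrantVol h a b i j p q false false =
      quadrantVol h a b i j p q false true * quadrantVol h a b i j p q true false := by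
  rw [quadrantVol_mul, quadrantVol_mul_eq_exchange_fst hij]
  refine setIntegral_congr_fun ((measurableSet_quadrant _ _).prod (measurableSet_quadrant _ _))
    fun z hz => ?_
  exact (pairDensity_exchange_of_mixed_eq_zero hh hpos h0
    (prod_mono (quadrant_subset _ _) (quadrant_subset _ _) hz)).symm

end Separation

section Positivity

variable {ι : Type*} [Fintype ι] {h : (ι → ℝ) → ℝ} {a b : ι → ℝ} {i j : ι} {p q c : ℝ}

theorem ae_lt_of_mem_quadrant_prod :
    ∀ᵐ z ∂volume.restrict
        (quadrant a b i j p q true true ×ˢ quadrant a b i j p q false false),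
      z.2 i < z.1 i ∧ z.2 j < z.1 j := by
  have hne (k : ι) (r : ℝ) : ∀ᵐ z : (ι → ℝ) × (ι → ℝ), z.1 k ≠ r :=
    Measure.quasiMeasurePreserving_fst.ae <| measure_eq_zero_iff_ae_notMem.1 <|
      Measure.pi_hyperplane (fun _ => (volume : Measure ℝ)) k r
  filter_upwards [ae_restrict_mem ((measurableSet_quadrant _ _).prod (measurableSet_quadrant _ _)),
    ae_restrict_of_ae (hne i p), ae_restrict_of_ae (hne j q)] with z hz hzi hzj
  exact ⟨lt_of_le_of_lt hz.2.2.1 (lt_of_le_of_ne hz.1.2.1 hzi.symm),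
    lt_of_le_of_lt hz.2.2.2 (lt_of_le_of_ne hz.1.2.2 hzj.symm)⟩

variable [DecidableEq ι]

/-- The expression `h * ∂_j ∂_i h - ∂_i h * ∂_j h`, whose sign is that of `∂_j ∂_i (log h)`, with
its four factors evaluated at four independent points. -/
def mixedForm (h : (ι → ℝ) → ℝ) (i j : ι) (x y z w : ι → ℝ) : ℝ :=
  h x * partialDeriv j (partialDeriv i h) y - partialDeriv i h z * partialDeriv j h w

/-- Positivity of `c * mixedForm h i j` at all quadruples of points of `K`. The constant `c` is
there to fix a sign. -/
def MixedFormPosOn (c : ℝ) (h : (ι → ℝ) → ℝ) (i j : ι) (K : Set (ι → ℝ)) : Prop :=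
  ∀ x ∈ K, ∀ y ∈ K, ∀ z ∈ K, ∀ w ∈ K, 0 < c * mixedForm h i j x y z w

theorem exchangeDefect_pos (hij : i ≠ j) (hh : ∀ x ∈ Icc a b, ContDiffAt ℝ 2 h x)
    (hM : MixedFormPosOn c h i j (Icc a b)) {u v : ι → ℝ} (hu : u ∈ Icc a b) (hv : v ∈ Icc a b)
    (hi : v i < u i) (hj : v j < u j) : 0 < c * exchangeDefect h i j (u, v) := by
  let W (x : ι → ℝ) (s t : ℝ) := update (update x i s) j t
  have hW {x : ι → ℝ} (hx : x ∈ Icc a b) {s t : ℝ} (hs : s ∈ Icc (v i) (u i))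
      (ht : t ∈ Icc (v j) (u j)) : W x s t ∈ Icc a b :=
    update_mem_Icc (update_mem_Icc hx i (Icc_subset_Icc (hv.1 i) (hu.2 i) hs)) j
      (Icc_subset_Icc (hv.1 j) (hu.2 j) ht)
  have hd (x) (hx : x ∈ Icc a b) : DifferentiableAt ℝ h x :=
    (hh x hx).differentiableAt two_ne_zero
  have hd' (x) (hx : x ∈ Icc a b) : DifferentiableAt ℝ (partialDeriv i h) x :=
    (contDiffAt_partialDeriv (hh x hx) one_add_one_eq_two.le i).differentiableAt one_ne_zero
  obtain ⟨s, hs, t, ht, hst⟩ := exists_mixedDeriv_eq_alternating_mul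
    (P := fun s t => h (W u s t)) (Q := fun s t => h (W v s t)) hi hj
    (fun s hs t ht => hasDerivAt_comp_update_update hij (hd _ (hW hu hs ht)))
    (fun s hs t ht => hasDerivAt_comp_update (hd _ (hW hu hs ht)))
    (fun s hs t ht => hasDerivAt_comp_update (hd' _ (hW hu hs ht)))
    (fun s hs t ht => hasDerivAt_comp_update_update hij (hd _ (hW hv hs ht)))
    (fun s hs t ht => hasDerivAt_comp_update (hd _ (hW hv hs ht)))
    (fun s hs t ht => hasDerivAt_comp_update (hd' _ (hW hv hs ht)))
  have hreset (x : ι → ℝ) (s : ℝ) : update (update x i s) j (x j) = update x i s := by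
    simp [hij.symm]
  have hdefect : exchangeDefect h i j (u, v) =
      h (W u (u i) (u j)) * h (W v (v i) (v j)) - h (W u (v i) (u j)) * h (W v (u i) (v j)) -
        h (W u (u i) (v j)) * h (W v (v i) (u j)) +
        h (W u (v i) (v j)) * h (W v (u i) (u j)) := by
    simp [exchangeDefect, pairDensity, exchange_apply, W, hreset, hij.symm]
  rw [hdefect, hst, ← mul_assoc, mul_add]
  have hvi : v i ∈ Icc (v i) (u i) := left_mem_Icc.2 hi.le
  have hvj : v j ∈ Icc (v j) (u j) := left_mem_Icc.2 hj.le
  exact mul_pos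
    (add_pos (hM _ (hW hv hvi hvj) _ (hW hu hs ht) _ (hW hv hs hvj) _ (hW hu hvi ht))
      (hM _ (hW hu hvi hvj) _ (hW hv hs ht) _ (hW hu hs hvj) _ (hW hv hvi ht)))
    (mul_pos (sub_pos.2 hi) (sub_pos.2 hj))

theorem quadrantVol_det_pos (hij : i ≠ j) (hh : ∀ x ∈ Icc a b, ContDiffAt ℝ 2 h x)
    (hM : MixedFormPosOn c h i j (Icc a b))
    (hpp : quadrantVol h a b i j p q true true ≠ 0)
    (hmm : quadrantVol h a b i j p q false false ≠ 0) :
    0 < c * (quadrantVol h a b i j p q true true * quadrantVol h a b i j p q false false -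
      quadrantVol h a b i j p q false true * quadrantVol h a b i j p q true false) := by
  have hint : IntegrableOn h (Icc a b) :=
    ContinuousOn.integrableOn_compact isCompact_Icc
      fun x hx => (hh x hx).continuousAt.continuousWithinAt
  have hQ : quadrant a b i j p q true true ×ˢ quadrant a b i j p q false false ⊆
      Icc a b ×ˢ Icc a b :=
    prod_mono (quadrant_subset _ _) (quadrant_subset _ _)
  have hvol :
      volume (quadrant a b i j p q true true ×ˢ quadrant a b i j p q false false) ≠ 0 := by
    rw [Measure.volume_eq_prod, Measure.prod_prod]
    exact mul_ne_zero (mt (setIntegral_measure_zero h) hpp) (mt (setIntegral_measure_zero h) hmm)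
  have hpos : ∀ᵐ z ∂volume.restrict
      (quadrant a b i j p q true true ×ˢ quadrant a b i j p q false false),
      0 < c * exchangeDefect h i j z := by
    filter_upwards [ae_lt_of_mem_quadrant_prod,
      ae_restrict_mem ((measurableSet_quadrant _ _).prod (measurableSet_quadrant _ _))]
      with z hlt hz
    exact exchangeDefect_pos hij hh hM (hQ hz).1 (hQ hz).2 hlt.1 hlt.2
  have hI := setIntegral_pos_of_ae_pos
    (((integrableOn_exchangeDefect hint i j).mono_set hQ).const_mul c) hvol hpos
  rw [integral_const_mul, setIntegral_exchangeDefect hij hint] at hI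
  linarith

theorem exists_mixedFormPosOn_Icc {U : Set (ι → ℝ)} {x₀ : ι → ℝ} (hU : U ∈ nhds x₀)
    (hh : ContDiffAt ℝ 2 h x₀) (hM : 0 < c * mixedForm h i j x₀ x₀ x₀ x₀) :
    ∃ a b : ι → ℝ, (∀ k, a k < b k) ∧ Icc a b ⊆ U ∧ MixedFormPosOn c h i j (Icc a b) := by
  have hcont (k : ι) : ContinuousAt (partialDeriv k h) x₀ :=
    (contDiffAt_partialDeriv hh one_add_one_eq_two.le k).continuousAt
  have hcont' : ContinuousAt (partialDeriv j (partialDeriv i h)) x₀ :=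
    (contDiffAt_partialDeriv (contDiffAt_partialDeriv hh one_add_one_eq_two.le i)
      (zero_add 1).le j).continuousAt
  have hform : ContinuousAt (fun z : ((ι → ℝ) × (ι → ℝ)) × (ι → ℝ) × (ι → ℝ) =>
      c * mixedForm h i j z.1.1 z.1.2 z.2.1 z.2.2) ((x₀, x₀), x₀, x₀) :=
    continuousAt_const.mul ((hh.continuousAt.fst'.fst'.mul hcont'.snd'.fst').sub
      ((hcont i).fst'.snd'.mul (hcont j).snd'.snd'))
  obtain ⟨r, hr, hball⟩ := Metric.nhds_basis_closedBall.mem_iff.1 <|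
    (hform.eventually (lt_mem_nhds hM)).and (continuousAt_id.fst'.fst'.eventually_mem hU)
  have hIcc : Icc (fun k => x₀ k - r) (fun k => x₀ k + r) = Metric.closedBall x₀ r := by
    simp only [closedBall_pi x₀ hr.le, Real.closedBall_eq_Icc, pi_univ_Icc]
  simp only [← closedBall_prod_same, ← hIcc] at hball
  refine ⟨fun k => x₀ k - r, fun k => x₀ k + r, fun k => by linarith,
    fun x hx => ?_, fun x hx y hy z hz w hw => ?_⟩
  · exact (@hball ((x, x), x, x) ⟨⟨hx, hx⟩, hx, hx⟩).2
  · exact (@hball ((x, y), z, w) ⟨⟨hx, hy⟩, hz, hw⟩).1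

end Positivity

section Cutting

variable {ι : Type*} [Fintype ι] {h : (ι → ℝ) → ℝ} {U : Set (ι → ℝ)}

/-- The cutting condition for the volume form with density `h` on `U`: if the leaf `{x_j = q}`
halves the `h`-volume of a box in `U` and the leaf `{x_i = p}` halves that of its part
`{x_j ≥ q}`, then together they cut the box into four parts of equal `h`-volume. -/
def CuttingCondition (h : (ι → ℝ) → ℝ) (U : Set (ι → ℝ)) : Prop :=
  ∀ a b : ι → ℝ, Icc a b ⊆ U → ∀ i j : ι, i ≠ j →
    ∀ p ∈ Icc (a i) (b i), ∀ q ∈ Icc (a j) (b j),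
      quadrantVol h a b i j p q true true + quadrantVol h a b i j p q false true =
        quadrantVol h a b i j p q true false + quadrantVol h a b i j p q false false →
      quadrantVol h a b i j p q true true = quadrantVol h a b i j p q false true →
      quadrantVol h a b i j p q true true = quadrantVol h a b i j p q false true ∧
        quadrantVol h a b i j p q false true = quadrantVol h a b i j p q true false ∧
        quadrantVol h a b i j p q true false = quadrantVol h a b i j p q false false

theorem cuttingCondition_iff_subboxVol {m : ℕ} {h : (Fin m → ℝ) → ℝ} {U : Set (Fin m → ℝ)} :
    CuttingCondition h U ↔
      ∀ a b : Fin m → ℝ, Icc a b ⊆ U → ∀ i j : Fin m, i ≠ j →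
        ∀ p ∈ Icc (a i) (b i), ∀ q ∈ Icc (a j) (b j),
          subboxVol h i j a b p q true true + subboxVol h i j a b p q false true =
            subboxVol h i j a b p q true false + subboxVol h i j a b p q false false →
          subboxVol h i j a b p q true true = subboxVol h i j a b p q false true →
          subboxVol h i j a b p q true true = subboxVol h i j a b p q false true ∧
            subboxVol h i j a b p q false true = subboxVol h i j a b p q true false ∧
            subboxVol h i j a b p q true false = subboxVol h i j a b p q false false := by
  refine forall₅_congr fun a b _ i j => forall_congr' fun hij => forall₂_congr fun p hp =>
    forall₂_congr fun q hq => ?_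
  simp only [subboxVol_eq_quadrantVol hij hp hq]

theorem eq_of_mul_eq_mul_of_add_eq_add {A B C D : ℝ} (hC : 0 ≤ C) (hD : 0 ≤ D)
    (hmul : A * D = B * C) (hadd : A + B = C + D) (hAB : A = B) : B = C ∧ C = D := by
  subst hAB
  rcases eq_or_ne A 0 with rfl | hA
  · constructor <;> linarith
  · obtain rfl := mul_left_cancel₀ hA hmul
    exact ⟨by linarith, rfl⟩

variable [DecidableEq ι]

theorem cuttingCondition_of_mixed_eq_zero (hh : ∀ x ∈ U, ContDiffAt ℝ 2 h x)
    (hpos : ∀ x ∈ U, 0 < h x)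
    (h0 : ∀ i j : ι, i ≠ j → ∀ x ∈ U,
      partialDeriv j (partialDeriv i fun y => Real.log (h y)) x = 0) :
    CuttingCondition h U := by
  intro a b hab i j hij p _ q _ hadd heq
  have hnonneg (s t : Bool) : 0 ≤ quadrantVol h a b i j p q s t :=
    setIntegral_nonneg (measurableSet_quadrant s t)
      fun x hx => (hpos x (hab (quadrant_subset s t hx))).le
  have hmul := quadrantVol_mul_eq_mul_of_mixed_eq_zero (p := p) (q := q) hij
    (fun x hx => hh x (hab hx)) (fun x hx => hpos x (hab hx))
    (fun k hk x hx => h0 i k hk x (hab hx))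
  exact ⟨heq, eq_of_mul_eq_mul_of_add_eq_add (hnonneg _ _) (hnonneg _ _) hmul hadd heq⟩

theorem not_cuttingCondition_of_mixedFormPosOn {a b : ι → ℝ} {i j : ι} {c : ℝ} (hij : i ≠ j)
    (hlt : ∀ k, a k < b k) (hab : Icc a b ⊆ U) (hh : ∀ x ∈ Icc a b, ContDiffAt ℝ 2 h x)
    (hpos : ∀ x ∈ Icc a b, 0 < h x) (hM : MixedFormPosOn c h i j (Icc a b)) :
    ¬ CuttingCondition h U := by
  intro hcut
  have hint : IntegrableOn h (Icc a b) :=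
    ContinuousOn.integrableOn_compact isCompact_Icc
      fun x hx => (hh x hx).continuousAt.continuousWithinAt
  obtain ⟨p, hp, q, hq, hadd, heq⟩ := exists_quadrantVol_balanced (fun k => (hlt k).le) hint i j
  obtain ⟨-, h₁, h₂⟩ := hcut a b hab i j hij p hp q hq hadd heq
  have hvol : volume (Icc a b) ≠ 0 := by
    simp only [Real.volume_Icc_pi, Finset.prod_ne_zero_iff, ne_eq, ENNReal.ofReal_eq_zero, not_le,
      sub_pos, hlt, implies_true]
  have htotal : 0 < ∫ x in Icc a b, h x := setIntegral_pos_of_ae_pos hint hvol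
    ((ae_restrict_mem measurableSet_Icc).mono hpos)
  rw [← sum_quadrantVol (i := i) (j := j) (p := p) (q := q) hint] at htotal
  have hdet := quadrantVol_det_pos (p := p) (q := q) hij hh hM
    (fun h0 => by linarith) (fun h0 => by linarith)
  rw [heq, h₁, h₂, sub_self, mul_zero] at hdet
  exact hdet.false

theorem mixed_eq_zero_of_cuttingCondition (hU : IsOpen U) (hh : ContDiffOn ℝ 2 h U)
    (hpos : ∀ x ∈ U, 0 < h x) (hcut : CuttingCondition h U) {i j : ι} (hij : i ≠ j)
    {x : ι → ℝ} (hx : x ∈ U) : partialDeriv j (partialDeriv i fun y => Real.log (h y)) x = 0 := by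
  have hC (y) (hy : y ∈ U) : ContDiffAt ℝ 2 h y := hh.contDiffAt (hU.mem_nhds hy)
  set σ := partialDeriv j (partialDeriv i fun y => Real.log (h y)) x with hσ
  by_contra hσ0
  have hform : mixedForm h i j x x x x = σ * h x ^ 2 := by
    rw [hσ, partialDeriv_partialDeriv_log (hC x hx) (hpos x hx).ne', div_mul_cancel₀, mixedForm]
    exact pow_ne_zero 2 (hpos x hx).ne'
  have hσform : 0 < σ * mixedForm h i j x x x x := by
    rw [hform, ← mul_assoc]
    exact mul_pos (mul_self_pos.2 hσ0) (pow_pos (hpos x hx) 2)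
  obtain ⟨a, b, hlt, hab, hM⟩ := exists_mixedFormPosOn_Icc (hU.mem_nhds hx) (hC x hx) hσform
  exact not_cuttingCondition_of_mixedFormPosOn hij hlt hab (fun y hy => hC y (hab hy))
    (fun y hy => hpos y (hab hy)) hM hcut

end Cutting

theorem stmt18_general {ι : Type*} [Fintype ι] [DecidableEq ι] {U : Set (ι → ℝ)}
    (hU : IsOpen U) {h : (ι → ℝ) → ℝ} (hh : ContDiffOn ℝ 2 h U) (hpos : ∀ x ∈ U, 0 < h x) :
    (∀ i j : ι, i ≠ j → ∀ x ∈ U,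
      partialDeriv j (partialDeriv i fun y => Real.log (h y)) x = 0) ↔ CuttingCondition h U :=
  ⟨cuttingCondition_of_mixed_eq_zero (fun _ hx => hh.contDiffAt (hU.mem_nhds hx)) hpos,
    fun hcut _ _ hij _ hx => mixed_eq_zero_of_cuttingCondition hU hh hpos hcut hij hx⟩

/-- On an open box `U`, the nonuniformity tensor of the codimension-1
web with density `h` vanishes iff the cutting condition holds: whenever a closed box
`K ⊆ U` is subdivided by two leaves into four subregions of `h`-volumes
`a = V_{−+}, b = V_{++}, c = V_{+−}, d = V_{−−}` with `b + a = c + d`, the equality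
`b = a` forces all four volumes to be equal. -/
theorem stmt18 {m : ℕ} (hm : 2 ≤ m)
    (I : Fin m → Set ℝ) (hIopen : ∀ k, IsOpen (I k)) (hIconn : ∀ k, IsPreconnected (I k))
    (h : (Fin m → ℝ) → ℝ)
    (hsm : ContDiffOn ℝ (⊤ : ℕ∞) h (Set.univ.pi I)) (hpos : ∀ x ∈ Set.univ.pi I, 0 < h x) :
    (∀ i j : Fin m, i ≠ j → ∀ x ∈ Set.univ.pi I, logpd2 h i j x = 0) ↔
    (∀ a b : Fin m → ℝ, Set.Icc a b ⊆ Set.univ.pi I →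
      ∀ i j : Fin m, i ≠ j →
      ∀ p ∈ Set.Icc (a i) (b i), ∀ q ∈ Set.Icc (a j) (b j),
        subboxVol h i j a b p q true true + subboxVol h i j a b p q false true =
          subboxVol h i j a b p q true false + subboxVol h i j a b p q false false →
        subboxVol h i j a b p q true true = subboxVol h i j a b p q false true →
        (subboxVol h i j a b p q true true = subboxVol h i j a b p q false true ∧
         subboxVol h i j a b p q false true = subboxVol h i j a b p q true false ∧
         subboxVol h i j a b p q true false = subboxVol h i j a b p q false false)) :=
  (stmt18_general (isOpen_set_pi Set.finite_univ fun k _ => hIopen k)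
    (contDiffOn_infty.1 hsm 2) hpos).trans cuttingCondition_iff_subboxVol
end
end
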